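/- arXiv:1602.00429 — 2 statements merged into one kernel-verified Lean document; each statement's English description precedes it below -/
import Mathlib

section
/- Let Q be a regular local ring, f₁,…,f_c a Q-regular sequence, and R = Q/(f₁,…,f_c) (a local complete intersection of codimension c). Let M₁,…,M_{c+1} be nonfree maximal Cohen–Macaulay R-modules. Then there exists i ∈ {1,…,c} such that Tor_n^R(M₁ ⊗_R ⋯ ⊗_R M_i, M_{i+1}) ≠ 0 for infinitely many n. -/
/-!
STATEMENT 4: Over a local complete intersection `R = Q ⧸ (f₁, …, f_c)` of codimension `c`,
given nonfree maximal Cohen–Macaulay `R`-modules `M₁, …, M_{c+1}` (here indexed `M 0, …, M c`),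
there is an `i ∈ {1, …, c}` such that `Tor_n^R(M 0 ⊗ ⋯ ⊗ M (i-1), M i) ≠ 0` for infinitely
many `n`.
-/

open CategoryTheory CategoryTheory.Limits

universe u

/-- A Noetherian local ring is regular if its maximal ideal can be generated by
(Krull dimension of the ring) many elements. -/
def IsRegularLocal (Q : Type u) [CommRing Q] [IsLocalRing Q] : Prop :=
  IsNoetherianRing Q ∧ ∃ s : Finset Q, Ideal.span (s : Set Q) = IsLocalRing.maximalIdeal Q ∧
    (s.card : WithBot ℕ∞) = ringKrullDim Q

/-- The depth of a module over a Noetherian local ring: the supremum of lengths of `M`-regular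
sequences of elements of the maximal ideal. -/
noncomputable def moduleDepth (R : Type u) [CommRing R] [IsLocalRing R]
    (M : Type u) [AddCommGroup M] [Module R M] : ℕ∞ :=
  sSup {n : ℕ∞ | ∃ rs : List R, n = (rs.length : ℕ∞) ∧
    (∀ x ∈ rs, x ∈ IsLocalRing.maximalIdeal R) ∧ RingTheory.Sequence.IsRegular M rs}

/-- `tensorUpTo R M i = M 0 ⊗ M 1 ⊗ ⋯ ⊗ M i`. -/
noncomputable def tensorUpTo (R : Type u) [CommRing R] (M : ℕ → ModuleCat.{u} R) :
    ℕ → ModuleCat.{u} R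
  | 0 => M 0
  | n + 1 => MonoidalCategory.tensorObj (tensorUpTo R M n) (M (n + 1))

/-!
If the Tor groups of `N` and `M` vanish in positive degrees, tensoring a minimal syzygy sequence of
`M` with `N` gives `βₙ(N ⊗ M) = βₙ₋₁(N ⊗ ΩM) + rank F₀ · βₙ(N)` for `0 < n`, so that `βₙ(N ⊗ M)` is
at least `β₀(N) + ⋯ + βₙ(N)` when `M` has infinite projective dimension. Hence the Betti numbers of
`M₁ ⊗ ⋯ ⊗ M_{c+1}` grow at least like a polynomial of degree `c` when all the successive Tor groups
vanish, whereas over a codimension `c` complete intersection they are bounded by a polynomial of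
degree `c - 1`.

A maximal Cohen–Macaulay module has projective dimension at most `c` over `Q` by
Auslander–Buchsbaum. Dividing out the regular sequence one element at a time, such a module reaches
a projective one after `c` reductions, each splicing it with itself: `0 → X → X' → F → X → 0`.
These reductions give the upper bound on the Betti numbers; by dimension shifting they also show
that `Tor` groups which vanish in all large degrees vanish in all positive degrees.
-/

open Abelian IsLocalRing TensorProduct

section ExtSequences

variable {R : Type u} [CommRing R]

/-- The map `Extⁿ(Y, L) → Extⁿ(X, L)` induced by `f : X ⟶ Y`, as an `R`-linear map. -/
noncomputable def extPrecomp {X Y : ModuleCat.{u} R} (f : X ⟶ Y) (L : ModuleCat.{u} R) (n : ℕ) :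
    Ext Y L n →ₗ[R] Ext X L n :=
  (Ext.mk₀ f).precompOfLinear R L (zero_add n)

/-- The connecting map `Extⁿ(X₁, L) → Extⁿ⁺¹(X₃, L)` of a short exact sequence
`0 → X₁ → X₂ → X₃ → 0`, as an `R`-linear map. -/
noncomputable def extConnecting {S : ShortComplex (ModuleCat.{u} R)} (hS : S.ShortExact)
    (L : ModuleCat.{u} R) (n : ℕ) : Ext S.X₁ L n →ₗ[R] Ext S.X₃ L (n + 1) :=
  hS.extClass.precompOfLinear R L (add_comm 1 n)

lemma extPrecomp_apply {X Y : ModuleCat.{u} R} (f : X ⟶ Y) (L : ModuleCat.{u} R) (n : ℕ)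
    (x : Ext Y L n) : extPrecomp f L n x = (Ext.mk₀ f).comp x (zero_add n) := rfl

lemma extConnecting_apply {S : ShortComplex (ModuleCat.{u} R)} (hS : S.ShortExact)
    (L : ModuleCat.{u} R) (n : ℕ) (x : Ext S.X₁ L n) :
    extConnecting hS L n x = hS.extClass.comp x (add_comm 1 n) := rfl

lemma extPrecomp_comp_apply {X Y Z : ModuleCat.{u} R} (f : X ⟶ Y) (g : Y ⟶ Z)
    (L : ModuleCat.{u} R) (n : ℕ) (x : Ext Z L n) :
    extPrecomp (f ≫ g) L n x = extPrecomp f L n (extPrecomp g L n x) := by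
  rw [extPrecomp_apply, extPrecomp_apply, extPrecomp_apply, ← Ext.mk₀_comp_mk₀,
    Ext.comp_assoc_of_second_deg_zero]

lemma extPrecomp_extConnecting {S T : ShortComplex (ModuleCat.{u} R)} (hS : S.ShortExact)
    (hT : T.ShortExact) (φ : S ⟶ T) (L : ModuleCat.{u} R) (n : ℕ) (x : Ext T.X₁ L n) :
    extPrecomp φ.τ₃ L (n + 1) (extConnecting hT L n x) =
      extConnecting hS L n (extPrecomp φ.τ₁ L n x) := by
  simp only [extPrecomp_apply, extConnecting_apply]
  rw [← Ext.comp_assoc (Ext.mk₀ φ.τ₃) hT.extClass x (zero_add 1) (add_comm 1 n) (by lia),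
    ← ShortComplex.ShortExact.extClass_naturality hS hT φ,
    Ext.comp_assoc hS.extClass (Ext.mk₀ φ.τ₁) x (add_zero 1) (zero_add n) (by lia)]

variable {S : ShortComplex (ModuleCat.{u} R)} (hS : S.ShortExact) (L : ModuleCat.{u} R) (n : ℕ)
include hS

lemma exact_extPrecomp_extPrecomp :
    Function.Exact (extPrecomp S.g L n) (extPrecomp S.f L n) := by
  intro x
  refine ⟨fun hx ↦ Ext.contravariant_sequence_exact₂ hS L x hx, ?_⟩
  rintro ⟨y, rfl⟩
  simp [extPrecomp_apply]

lemma exact_extPrecomp_extConnecting :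
    Function.Exact (extPrecomp S.f L n) (extConnecting hS L n) := by
  intro x
  refine ⟨fun hx ↦ Ext.contravariant_sequence_exact₁ hS L x (add_comm 1 n) hx, ?_⟩
  rintro ⟨y, rfl⟩
  simp [extPrecomp_apply, extConnecting_apply]

lemma exact_extConnecting_extPrecomp :
    Function.Exact (extConnecting hS L n) (extPrecomp S.g L (n + 1)) := by
  intro x
  refine ⟨fun hx ↦ Ext.contravariant_sequence_exact₃ hS L x hx (add_comm 1 n), ?_⟩
  rintro ⟨y, rfl⟩
  simp [extPrecomp_apply, extConnecting_apply]

lemma extPrecomp_surjective_of_eq_zero (h : extPrecomp S.f L n = 0) :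
    Function.Surjective (extPrecomp S.g L n) :=
  fun x ↦ (exact_extPrecomp_extPrecomp hS L n x).1 (by rw [h, LinearMap.zero_apply])

lemma extConnecting_injective_of_eq_zero (h : extPrecomp S.f L n = 0) :
    Function.Injective (extConnecting hS L n) := by
  rw [injective_iff_map_eq_zero]
  intro x hx
  obtain ⟨y, rfl⟩ := (exact_extPrecomp_extConnecting hS L n x).1 hx
  rw [h, LinearMap.zero_apply]

lemma extConnecting_surjective [Projective S.X₂] : Function.Surjective (extConnecting hS L n) :=
  precomp_extClass_surjective_of_projective_X₂ L hS n

lemma extConnecting_injective [Projective S.X₂] :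
    Function.Injective (extConnecting hS L (n + 1)) :=
  extConnecting_injective_of_eq_zero hS L (n + 1) <| LinearMap.ext fun x ↦ by
    rw [Ext.eq_zero_of_projective x, map_zero, map_zero]

lemma subsingleton_ext_X₁ (h₂ : Subsingleton (Ext S.X₂ L n))
    (h₃ : Subsingleton (Ext S.X₃ L (n + 1))) : Subsingleton (Ext S.X₁ L n) := by
  refine subsingleton_of_forall_eq 0 fun x ↦ ?_
  obtain ⟨y, rfl⟩ := (exact_extPrecomp_extConnecting hS L n x).1 (Subsingleton.elim _ _)
  rw [Subsingleton.elim y 0, map_zero]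

lemma subsingleton_ext_X₂ (h₁ : Subsingleton (Ext S.X₁ L n))
    (h₃ : Subsingleton (Ext S.X₃ L n)) : Subsingleton (Ext S.X₂ L n) := by
  refine subsingleton_of_forall_eq 0 fun x ↦ ?_
  obtain ⟨y, rfl⟩ := (exact_extPrecomp_extPrecomp hS L n x).1 (Subsingleton.elim _ _)
  rw [Subsingleton.elim y 0, map_zero]

lemma subsingleton_ext_X₁_iff [Projective S.X₂] :
    Subsingleton (Ext S.X₁ L (n + 1)) ↔ Subsingleton (Ext S.X₃ L (n + 2)) :=
  (Equiv.ofBijective _ ⟨extConnecting_injective hS L n,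
    extConnecting_surjective hS L (n + 1)⟩).subsingleton_congr

end ExtSequences

section Betti

lemma length_le_add_of_exact {R M₁ M₂ M₃ : Type*} [Ring R] [AddCommGroup M₁] [AddCommGroup M₂]
    [AddCommGroup M₃] [Module R M₁] [Module R M₂] [Module R M₃] {f : M₁ →ₗ[R] M₂}
    {g : M₂ →ₗ[R] M₃} (h : Function.Exact f g) :
    Module.length R M₂ ≤ Module.length R M₁ + Module.length R M₃ := by
  rw [Module.length_eq_add_of_exact (LinearMap.ker g).subtype g.rangeRestrict
    (Submodule.subtype_injective _) g.surjective_rangeRestrict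
    (fun x ↦ by simp [Subtype.ext_iff]), h.linearMap_ker_eq]
  gcongr
  · exact Module.length_le_of_surjective _ f.surjective_rangeRestrict
  · exact Module.length_le_of_injective _ (Submodule.subtype_injective _)

variable {R : Type u} [CommRing R] [IsLocalRing R]

variable (R) in
/-- The residue field of a local ring, as an object of the category of modules. -/
noncomputable abbrev residueModule : ModuleCat.{u} R := ModuleCat.of R (ResidueField R)

/-- The `n`-th Betti number of a module over a local ring with residue field `k`. It is encoded as
the length of `Extⁿ(M, k)`, so that it is defined (and possibly infinite) for every module. -/
noncomputable def betti (M : ModuleCat.{u} R) (n : ℕ) : ℕ∞ :=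
  Module.length R (Ext M (residueModule R) n)

lemma betti_eq_zero_iff {M : ModuleCat.{u} R} {n : ℕ} :
    betti M n = 0 ↔ Subsingleton (Ext M (residueModule R) n) :=
  Module.length_eq_zero_iff

lemma betti_succ_eq_zero_of_projective (M : ModuleCat.{u} R) [Projective M] (n : ℕ) :
    betti M (n + 1) = 0 :=
  betti_eq_zero_iff.2 (Ext.subsingleton_of_projective M _ n)

lemma betti_zero_le_of_epi {M N : ModuleCat.{u} R} (g : M ⟶ N) [Epi g] : betti N 0 ≤ betti M 0 :=
  Module.length_le_of_injective (extPrecomp g (residueModule R) 0)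
    (Ext.precomp_mk₀_injective_of_epi _ g)

lemma betti_le_of_comp_eq_id {M N : ModuleCat.{u} R} {i : M ⟶ N} {p : N ⟶ M} (h : i ≫ p = 𝟙 M)
    (n : ℕ) : betti M n ≤ betti N n := by
  refine Module.length_le_of_injective (extPrecomp p _ n)
    (Function.LeftInverse.injective (g := extPrecomp i _ n) fun x ↦ ?_)
  rw [← extPrecomp_comp_apply, h, extPrecomp_apply, Ext.mk₀_id_comp]

lemma betti_X₃_succ_le {S : ShortComplex (ModuleCat.{u} R)} (hS : S.ShortExact) (n : ℕ) :
    betti S.X₃ (n + 1) ≤ betti S.X₁ n + betti S.X₂ (n + 1) :=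
  length_le_add_of_exact (exact_extConnecting_extPrecomp hS _ n)

lemma betti_X₃_succ_le_of_projective {S : ShortComplex (ModuleCat.{u} R)} (hS : S.ShortExact)
    [Projective S.X₂] (n : ℕ) : betti S.X₃ (n + 1) ≤ betti S.X₁ n := by
  simpa only [betti_succ_eq_zero_of_projective, add_zero] using betti_X₃_succ_le hS n

lemma length_residueField : Module.length R (ResidueField R) = 1 := by
  have := isSimpleModule_iff_isCoatom.2 (maximalIdeal.isMaximal R).out
  exact Module.length_eq_one R (R ⧸ maximalIdeal R)

lemma betti_zero_ne_top (M : ModuleCat.{u} R) [Module.Finite R M] : betti M 0 ≠ ⊤ := by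
  obtain ⟨n, π, hπ⟩ := Module.Finite.exists_fin' R M
  have hF : betti (ModuleCat.of R (Fin n → R)) 0 = n := by
    rw [betti, Ext.linearEquiv₀.length_eq, (ModuleCat.homLinearEquiv (S := R)).length_eq,
      ← ((Pi.basisFun R (Fin n)).constr R).length_eq, Module.length_pi]
    simp [length_residueField]
  have : Epi (ModuleCat.ofHom π) := (ModuleCat.epi_iff_surjective _).2 hπ
  exact ne_top_of_le_ne_top (hF ▸ ENat.natCast_ne_top n) (betti_zero_le_of_epi (ModuleCat.ofHom π))

end Betti

section MinimalCovers

variable {R : Type u} [CommRing R] [IsLocalRing R]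

lemma exists_minimal_cover (M : Type*) [AddCommGroup M] [Module R M] [Module.Finite R M] :
    ∃ (n : ℕ) (π : (Fin n → R) →ₗ[R] M), Function.Surjective π ∧
      LinearMap.ker π ≤ maximalIdeal R • ⊤ := by
  let b := Module.finBasis (ResidueField R) (ResidueField R ⊗[R] M)
  obtain ⟨v, hv⟩ := (TensorProduct.mk_surjective R M (ResidueField R)
    Ideal.Quotient.mk_surjective).comp_left b
  refine ⟨_, Fintype.linearCombination R v, ?_, fun e he ↦ ?_⟩
  · rw [← LinearMap.range_eq_top, Fintype.range_linearCombination]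
    exact span_eq_top_of_tmul_eq_basis _ b (congr_fun hv)
  · have hsum : ∑ i, residue R (e i) • b i = 0 := by
      have := congr_arg (TensorProduct.mk R (ResidueField R) M 1) (LinearMap.mem_ker.1 he)
      rw [Fintype.linearCombination_apply, map_sum, map_zero] at this
      rw [← this]
      refine Finset.sum_congr rfl fun i _ ↦ ?_
      rw [map_smul, ← congr_fun hv i]
      exact algebraMap_smul (ResidueField R) (e i) _
    have hres := Fintype.linearIndependent_iff.1 b.linearIndependent _ hsum
    rw [pi_eq_sum_univ e]
    refine Submodule.sum_mem _ fun i _ ↦ Submodule.smul_mem_smul ?_ Submodule.mem_top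
    exact (residue_eq_zero_iff _).1 (hres i)

lemma extPrecomp_residueModule_zero_eq_zero {X Y : ModuleCat.{u} R} {φ : X ⟶ Y}
    (hφ : LinearMap.range φ.hom ≤ maximalIdeal R • ⊤) :
    extPrecomp φ (residueModule R) 0 = 0 := by
  ext x
  obtain ⟨ψ, rfl⟩ := (Ext.mk₀_bijective _ _).2 x
  have hψ : maximalIdeal R • (⊤ : Submodule R Y) ≤ LinearMap.ker ψ.hom :=
    Submodule.smul_le.2 fun r hr y _ ↦ by
      rw [LinearMap.mem_ker, map_smul, Algebra.smul_def, ResidueField.algebraMap_eq,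
        (residue_eq_zero_iff r).2 hr, zero_mul]
  rw [extPrecomp_apply, Ext.mk₀_comp_mk₀, LinearMap.zero_apply, Ext.mk₀_eq_zero_iff]
  ext x
  exact hψ (hφ ⟨x, rfl⟩)

lemma subsingleton_of_betti_zero_eq_zero (M : ModuleCat.{u} R) [Module.Finite R M]
    (h : betti M 0 = 0) : Subsingleton M := by
  obtain ⟨n, π, hπ, hker⟩ := exists_minimal_cover (R := R) M
  have hsurj := extPrecomp_surjective_of_eq_zero (LinearMap.shortExact_shortComplexKer hπ)
    (residueModule R) 0 (extPrecomp_residueModule_zero_eq_zero (by simpa using hker))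
  have := betti_eq_zero_iff.1 h
  have := hsurj.subsingleton
  suffices IsEmpty (Fin n) from hπ.subsingleton
  refine ⟨fun i ↦ one_ne_zero (α := ResidueField R) ?_⟩
  let ρ : (Fin n → R) →ₗ[R] ResidueField R := Algebra.linearMap R _ ∘ₗ LinearMap.proj i
  have hρ : ModuleCat.ofHom ρ = 0 := Ext.mk₀_eq_zero_iff _ |>.1 (Subsingleton.elim _ _)
  simpa [ρ] using LinearMap.congr_fun (congr_arg ModuleCat.Hom.hom hρ) (Pi.single i 1)

lemma hasProjectiveDimensionLT_of_betti_eq_zero [IsNoetherianRing R] (M : ModuleCat.{u} R)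
    [Module.Finite R M] (n : ℕ) (h : betti M n = 0) : HasProjectiveDimensionLT M n := by
  induction n generalizing M with
  | zero =>
    have := subsingleton_of_betti_zero_eq_zero M h
    exact (ModuleCat.isZero_of_subsingleton M).hasProjectiveDimensionLT_zero
  | succ n ih =>
    obtain ⟨r, π, hπ, hker⟩ := exists_minimal_cover (R := R) M
    have hS := LinearMap.shortExact_shortComplexKer hπ
    have hinj : Function.Injective (extConnecting hS (residueModule R) n) := by
      cases n with
      | zero =>
        exact extConnecting_injective_of_eq_zero hS _ 0
          (extPrecomp_residueModule_zero_eq_zero (by simpa using hker))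
      | succ n => exact extConnecting_injective hS _ n
    have := betti_eq_zero_iff.1 h
    exact hS.hasProjectiveDimensionLT_X₃ n (ih _ (betti_eq_zero_iff.2 hinj.subsingleton))
      (hasProjectiveDimensionLT_of_ge _ 1 _ (by lia))

end MinimalCovers

section Multichoose

lemma multichoose_succ_eq_choose (j n : ℕ) : (j + 1).multichoose n = (n + j).choose j := by
  rw [Nat.multichoose_eq, ← Nat.choose_symm_add]
  congr 1
  lia

lemma multichoose_succ_pos (j n : ℕ) : 0 < (j + 1).multichoose n := by
  rw [multichoose_succ_eq_choose]
  exact Nat.choose_pos (Nat.le_add_left j n)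

lemma monotone_multichoose_succ (j : ℕ) : Monotone (j + 1).multichoose :=
  monotone_nat_of_le_succ fun n ↦ by
    rw [Nat.multichoose_succ_succ]
    exact Nat.le_add_left _ _

lemma sum_range_multichoose_eq_multichoose_succ (j n : ℕ) :
    ∑ i ∈ Finset.range (n + 1), j.multichoose i = (j + 1).multichoose n := by
  rw [Nat.sum_range_multichoose, multichoose_succ_eq_choose]

lemma exists_mul_multichoose_lt (j C : ℕ) :
    ∃ n, C * j.multichoose n < (j + 1).multichoose n := by
  cases j with
  | zero => exact ⟨1, by simp⟩
  | succ j =>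
    refine ⟨C * (j + 1), ?_⟩
    suffices h : (j + 2).multichoose (C * (j + 1)) =
        (C + 1) * (j + 1).multichoose (C * (j + 1)) by
      rw [h]
      exact Nat.mul_lt_mul_of_pos_right C.lt_succ_self (multichoose_succ_pos j _)
    refine Nat.eq_of_mul_eq_mul_right j.succ_pos ?_
    rw [multichoose_succ_eq_choose, multichoose_succ_eq_choose, ← add_assoc, Nat.succ_eq_add_one,
      ← Nat.add_one_mul_choose_eq]
    ring

lemma le_add_mul_multichoose_succ {b : ℕ → ℕ∞} {j C D : ℕ} (h₀ : b 0 ≤ D) (h₁ : b 1 ≤ C)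
    (h : ∀ n, b (n + 2) ≤ b n + (C * j.multichoose (n + 1) : ℕ)) (n : ℕ) :
    b n ≤ (D + C * (j + 1).multichoose n : ℕ) := by
  induction n using Nat.twoStepInduction with
  | zero => exact h₀.trans (by exact_mod_cast Nat.le_add_right _ _)
  | one =>
    refine h₁.trans ?_
    norm_cast
    nlinarith [multichoose_succ_pos j 1]
  | more n ihn _ =>
    refine ((h n).trans (add_le_add_left ihn _)).trans ?_
    norm_cast
    rw [Nat.multichoose_succ_succ j (n + 1), Nat.multichoose_succ_succ j n]
    nlinarith

end Multichoose

section ReducibleComplexity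

variable {R : Type u} [CommRing R]

/-- `HasReducibleComplexity j X` says that the finite module `X` becomes projective after `j`
reductions. A reduction replaces `X` by a module `X'` which sits in an exact sequence
`0 → X → X' → F → X → 0` with `F` finite projective; the sequence is recorded as two short exact
sequences glued along `K`. -/
inductive HasReducibleComplexity : ℕ → ModuleCat.{u} R → Prop
  | of_projective {X : ModuleCat.{u} R} (hfin : Module.Finite R X) (hproj : Module.Projective R X) :
      HasReducibleComplexity 0 X
  | of_reduction {j : ℕ} {X X' K F : ModuleCat.{u} R} {i : X ⟶ X'} {q : X' ⟶ K} {k : K ⟶ F}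
      {p : F ⟶ X} {hiq : i ≫ q = 0} {hkp : k ≫ p = 0}
      (hX : (ShortComplex.mk i q hiq).ShortExact) (hK : (ShortComplex.mk k p hkp).ShortExact)
      (hfin : Module.Finite R F) (hproj : Module.Projective R F)
      (hred : HasReducibleComplexity j X') : HasReducibleComplexity (j + 1) X

lemma HasReducibleComplexity.finite {j : ℕ} {X : ModuleCat.{u} R}
    (hX : HasReducibleComplexity j X) : Module.Finite R X := by
  cases hX with
  | of_projective hfin _ => exact hfin
  | of_reduction _ hK _ _ _ => exact .of_surjective _ hK.moduleCat_surjective_g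

lemma HasReducibleComplexity.of_exact {j : ℕ} {X X' F : Type u} [AddCommGroup X] [Module R X]
    [AddCommGroup X'] [Module R X'] [AddCommGroup F] [Module R F] [Module.Finite R F]
    [Module.Projective R F] {g : X →ₗ[R] X'} {φ : X' →ₗ[R] F} {ρ : F →ₗ[R] X}
    (hg : Function.Injective g) (hgφ : Function.Exact g φ) (hφρ : Function.Exact φ ρ)
    (hρ : Function.Surjective ρ) (h : HasReducibleComplexity j (ModuleCat.of R X')) :
    HasReducibleComplexity (j + 1) (ModuleCat.of R X) := by
  have hcomp : φ.rangeRestrict ∘ₗ g = 0 :=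
    LinearMap.ext fun x ↦ Subtype.ext (hgφ.apply_apply_eq_zero x)
  have hX : (ModuleCat.shortComplexOfCompEqZero g φ.rangeRestrict hcomp).ShortExact :=
    ModuleCat.shortComplex_shortExact _
      (fun z ↦ Subtype.ext_iff.trans (hgφ z)) hg φ.surjective_rangeRestrict
  have hexact : Function.Exact (LinearMap.range φ).subtype ρ := fun z ↦ by
    simpa using hφρ z
  have hK : (ModuleCat.shortComplexOfCompEqZero _ ρ hexact.linearMap_comp_eq_zero).ShortExact :=
    ModuleCat.shortComplex_shortExact _ hexact Subtype.val_injective hρ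
  exact .of_reduction hX hK ‹_› ‹_› h

lemma HasReducibleComplexity.subsingleton_ext {j : ℕ} {X : ModuleCat.{u} R}
    (hX : HasReducibleComplexity j X) (L : ModuleCat.{u} R)
    (h : ∀ᶠ n in Filter.atTop, Subsingleton (Ext X L n)) (n : ℕ) :
    Subsingleton (Ext X L (n + 1)) := by
  induction hX generalizing n with
  | of_projective _ _ => exact Ext.subsingleton_of_projective _ L n
  | @of_reduction _ X X' K _ _ _ _ _ _ _ hX hK _ _ _ ih =>
    obtain ⟨N, hN⟩ := Filter.eventually_atTop.1 h
    have hshift (n : ℕ) : Subsingleton (Ext K L (n + 1)) ↔ Subsingleton (Ext X L (n + 2)) :=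
      subsingleton_ext_X₁_iff hK L n
    have hX' (n : ℕ) : Subsingleton (Ext X' L (n + 1)) := by
      refine ih (Filter.eventually_atTop.2 ⟨N + 1, fun n hn ↦ ?_⟩) n
      obtain ⟨n, rfl⟩ := Nat.exists_eq_add_of_le' (Nat.one_le_of_lt hn)
      exact subsingleton_ext_X₂ hX L _ (hN _ (by lia)) ((hshift n).2 (hN _ (by lia)))
    have hdown (n : ℕ) (hn : Subsingleton (Ext X L (n + 3))) : Subsingleton (Ext X L (n + 1)) :=
      subsingleton_ext_X₁ hX L (n + 1) (hX' n) ((hshift (n + 1)).2 hn)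
    have descend (k : ℕ) : ∀ n, N ≤ n + 2 * k → Subsingleton (Ext X L (n + 1)) := by
      induction k with
      | zero => exact fun n hn ↦ hN _ (by lia)
      | succ k ihk => exact fun n hn ↦ hdown n (ihk (n + 2) (by lia))
    exact descend N n (by lia)

variable [IsLocalRing R]

lemma HasReducibleComplexity.exists_betti_le {j : ℕ} {X : ModuleCat.{u} R}
    (hX : HasReducibleComplexity j X) :
    ∃ C : ℕ, ∀ n, betti X n ≤ (C * j.multichoose n : ℕ) := by
  induction hX with
  | @of_projective X _ _ =>
    obtain ⟨C, hC⟩ := ENat.ne_top_iff_exists.1 (betti_zero_ne_top X)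
    refine ⟨C, fun n ↦ ?_⟩
    cases n with
    | zero => simp [← hC]
    | succ n => simp [betti_succ_eq_zero_of_projective]
  | @of_reduction j X X' K F _ q _ p _ _ hX hK _ _ _ ih =>
    obtain ⟨C, hC⟩ := ih
    have := hX.epi_g
    have := hK.epi_g
    obtain ⟨D, hD⟩ := ENat.ne_top_iff_exists.1 (betti_zero_ne_top F)
    have hXK (n : ℕ) : betti X (n + 1) ≤ betti K n := betti_X₃_succ_le_of_projective hK n
    have h₀ : betti X 0 ≤ D := by
      rw [hD]
      exact betti_zero_le_of_epi p
    have h₁ : betti X 1 ≤ C := by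
      simpa using ((hXK 0).trans (betti_zero_le_of_epi q)).trans (hC 0)
    have hrec (n : ℕ) : betti X (n + 2) ≤ betti X n + (C * j.multichoose (n + 1) : ℕ) :=
      calc betti X (n + 2) ≤ betti K (n + 1) := hXK (n + 1)
        _ ≤ betti X n + betti X' (n + 1) := betti_X₃_succ_le hX n
        _ ≤ betti X n + (C * j.multichoose (n + 1) : ℕ) := by gcongr; exact hC (n + 1)
    have hbound := le_add_mul_multichoose_succ h₀ h₁ hrec
    refine ⟨D + C, fun n ↦ (hbound n).trans ?_⟩
    norm_cast
    nlinarith [multichoose_succ_pos j n]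

lemma HasReducibleComplexity.betti_ne_zero [IsNoetherianRing R] {j : ℕ} {M : ModuleCat.{u} R}
    (hM : HasReducibleComplexity j M) (hfree : ¬ Module.Free R M) (n : ℕ) :
    betti M n ≠ 0 := by
  intro h
  have := hM.finite
  have := hasProjectiveDimensionLT_of_betti_eq_zero M n h
  have h₁ := hM.subsingleton_ext (residueModule R) (Filter.eventually_atTop.2
    ⟨n, fun m hm ↦ HasProjectiveDimensionLT.subsingleton M n m hm _⟩) 0
  have := hasProjectiveDimensionLT_of_betti_eq_zero M 1 (betti_eq_zero_iff.2 h₁)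
  rw [← projective_iff_hasProjectiveDimensionLT_one, ← IsProjective.iff_projective] at this
  exact hfree Module.free_of_flat_of_isLocalRing

end ReducibleComplexity

section CharacterModule

variable {R : Type u} [CommRing R]

lemma exact_characterModule_dual {A B C : Type*} [AddCommGroup A] [AddCommGroup B]
    [AddCommGroup C] [Module R A] [Module R B] [Module R C] {f : A →ₗ[R] B} {g : B →ₗ[R] C}
    (h : Function.Exact f g) :
    Function.Exact (CharacterModule.dual g) (CharacterModule.dual f) := by
  refine fun c ↦ ⟨fun hc ↦ ?_, ?_⟩
  · let c' : CharacterModule (B ⧸ LinearMap.ker g) :=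
      QuotientAddGroup.lift (LinearMap.ker g).toAddSubgroup c fun b hb ↦ by
        obtain ⟨a, rfl⟩ := (h b).1 hb
        exact DFunLike.congr_fun hc a
    obtain ⟨e, he⟩ := CharacterModule.dual_surjective_of_injective
      ((LinearMap.ker g).liftQ g le_rfl)
      (LinearMap.ker_eq_bot.1 (Submodule.ker_liftQ_eq_bot' _ _ rfl)) c'
    exact ⟨e, DFunLike.ext _ _ fun b ↦ DFunLike.congr_fun he (Submodule.Quotient.mk b)⟩
  · rintro ⟨c, rfl⟩
    rw [← LinearMap.comp_apply, ← CharacterModule.dual_comp, h.linearMap_comp_eq_zero,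
      CharacterModule.dual_zero, LinearMap.zero_apply]

lemma exists_comp_eq_of_exact_lTensor {N A B C : Type*} [AddCommGroup N] [AddCommGroup A]
    [AddCommGroup B] [AddCommGroup C] [Module R N] [Module R A] [Module R B] [Module R C]
    {f : A →ₗ[R] B} {g : B →ₗ[R] C} (h : Function.Exact (f.lTensor N) (g.lTensor N))
    (φ : B →ₗ[R] CharacterModule N) (hφ : φ ∘ₗ f = 0) :
    ∃ ψ : C →ₗ[R] CharacterModule N, ψ ∘ₗ g = φ := by
  have h' : Function.Exact (f.rTensor N) (g.rTensor N) :=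
    (Function.Exact.iff_of_ladder_linearEquiv (e₁ := TensorProduct.comm R N A)
      (e₂ := TensorProduct.comm R N B) (e₃ := TensorProduct.comm R N C)
      (by ext; simp) (by ext; simp)).2 h
  obtain ⟨e, he⟩ := (exact_characterModule_dual h' (CharacterModule.homEquiv φ)).1 (by
    rw [← CharacterModule.homEquiv.symm.map_eq_zero_iff]
    exact hφ)
  refine ⟨CharacterModule.homEquiv.symm e, ?_⟩
  rw [← CharacterModule.homEquiv.symm_apply_apply φ, ← he]
  rfl

/-- The character module `Hom(N, ℚ/ℤ)`, as an object of the category of modules. -/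
abbrev characterObj (N : ModuleCat.{u} R) : ModuleCat.{u} R := ModuleCat.of R (CharacterModule N)

/-- The short complex of character modules of a short complex of modules. -/
abbrev characterShortComplex (S : ShortComplex (ModuleCat.{u} R)) :
    ShortComplex (ModuleCat.{u} R) :=
  ModuleCat.shortComplexOfCompEqZero (CharacterModule.dual S.g.hom) (CharacterModule.dual S.f.hom)
    (by rw [← CharacterModule.dual_comp, ← ModuleCat.hom_comp, S.zero, ModuleCat.hom_zero,
      CharacterModule.dual_zero])

lemma exact_hom_of_shortExact {S : ShortComplex (ModuleCat.{u} R)} (hS : S.ShortExact) :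
    Function.Exact S.f.hom S.g.hom :=
  (ShortComplex.ShortExact.moduleCat_exact_iff_function_exact S).1 hS.exact

lemma shortExact_characterShortComplex {S : ShortComplex (ModuleCat.{u} R)} (hS : S.ShortExact) :
    (characterShortComplex S).ShortExact :=
  ModuleCat.shortComplex_shortExact _ (exact_characterModule_dual (exact_hom_of_shortExact hS))
    (CharacterModule.dual_injective_of_surjective _ hS.moduleCat_surjective_g)
    (CharacterModule.dual_surjective_of_injective _ hS.moduleCat_injective_f)

lemma injective_characterObj (N : ModuleCat.{u} R) [Module.Flat R N] :
    Injective (characterObj N) :=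
  (Module.injective_iff_injective_object R (CharacterModule N)).1
    (Module.Flat.iff_characterModule_injective.1 inferInstance)

end CharacterModule

section TorIndependence

open scoped MonoidalCategory

variable {R : Type u} [CommRing R]

/-- `N` and `M` are Tor-independent: all `Tor n N M` with `0 < n` vanish. It is encoded through the
duality between `Tor n N M` and the `n`-th `Ext` group of `M` into the character module of `N`, so
that the long exact sequences for `Ext` apply. -/
def TorIndependent (N M : ModuleCat.{u} R) : Prop :=
  ∀ n : ℕ, Subsingleton (Ext M (characterObj N) (n + 1))

lemma subsingleton_ext_characterObj_of_isZero_tor {N M : ModuleCat.{u} R} {n : ℕ}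
    (h : IsZero (((Tor (ModuleCat.{u} R) (n + 1)).obj N).obj M)) :
    Subsingleton (Ext M (characterObj N) (n + 1)) := by
  let P := ProjectiveResolution.of M
  have hex : Function.Exact ((P.complex.d (n + 2) (n + 1)).hom.lTensor N)
      ((P.complex.d (n + 1) n).hom.lTensor N) := by
    have hH := (HomologicalComplex.exactAt_iff_isZero_homology _ _).2 <| h.of_iso
      (P.isoLeftDerivedObj ((MonoidalCategory.tensoringLeft _).obj N) (n + 1)).symm
    rw [HomologicalComplex.exactAt_iff' _ (n + 2) (n + 1) n (by simp) (by simp)] at hH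
    exact (ShortComplex.ShortExact.moduleCat_exact_iff_function_exact _).1 hH
  refine subsingleton_of_forall_eq 0 fun x ↦ ?_
  obtain ⟨φ, hφ, rfl⟩ := P.extMk_surjective x (n + 2) rfl
  rw [P.extMk_eq_zero_iff φ (n + 2) rfl hφ n rfl]
  obtain ⟨ψ, hψ⟩ := exists_comp_eq_of_exact_lTensor hex φ.hom (congr_arg ModuleCat.Hom.hom hφ)
  exact ⟨ModuleCat.ofHom ψ, ModuleCat.hom_ext hψ⟩

namespace TorIndependent

lemma of_projective (N M : ModuleCat.{u} R) [Projective M] : TorIndependent N M :=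
  fun n ↦ Ext.subsingleton_of_projective M _ n

variable {S : ShortComplex (ModuleCat.{u} R)} (hS : S.ShortExact)
include hS

lemma of_shortExact_right [Projective S.X₂] {N : ModuleCat.{u} R} (h : TorIndependent N S.X₃) :
    TorIndependent N S.X₁ :=
  fun n ↦ (subsingleton_ext_X₁_iff hS _ n).2 (h (n + 1))

lemma of_shortExact_left [Module.Flat R S.X₂] {M : ModuleCat.{u} R} (h : TorIndependent S.X₃ M) :
    TorIndependent S.X₁ M := fun n ↦ by
  have := injective_characterObj S.X₂
  have := h (n + 1)
  refine subsingleton_of_forall_eq 0 fun x ↦ ?_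
  obtain ⟨y, rfl⟩ := Ext.covariant_sequence_exact₃ M (shortExact_characterShortComplex hS) x rfl
    (Subsingleton.elim _ _)
  rw [Ext.eq_zero_of_injective y, Ext.zero_comp]

lemma lTensor_injective {N : ModuleCat.{u} R} (h : TorIndependent N S.X₃) :
    Function.Injective (S.f.hom.lTensor N) := by
  rw [LinearMap.lTensor_inj_iff_rTensor_inj, rTensor_injective_iff_lcomp_surjective]
  intro ψ
  have := h 0
  obtain ⟨x, hx⟩ := (exact_extPrecomp_extConnecting hS (characterObj N) 0
    (Ext.mk₀ (ModuleCat.ofHom ψ))).1 (Subsingleton.elim _ _)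
  obtain ⟨χ, rfl⟩ := (Ext.mk₀_bijective _ _).2 x
  rw [extPrecomp_apply, Ext.mk₀_comp_mk₀, (Ext.mk₀_bijective _ _).1.eq_iff] at hx
  exact ⟨χ.hom, congr_arg ModuleCat.Hom.hom hx⟩

lemma rTensor_injective {M : ModuleCat.{u} R} (h : TorIndependent S.X₃ M) :
    Function.Injective (S.f.hom.rTensor M) := by
  rw [← LinearMap.lTensor_inj_iff_rTensor_inj, ← CharacterModule.dual_surjective_iff_injective]
  intro c
  have := h 0
  obtain ⟨x, hx⟩ := Ext.covariant_sequence_exact₃ M (shortExact_characterShortComplex hS)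
    (Ext.mk₀ (ModuleCat.ofHom (CharacterModule.curry c))) rfl (Subsingleton.elim _ _)
  obtain ⟨χ, rfl⟩ := (Ext.mk₀_bijective _ _).2 x
  rw [Ext.mk₀_comp_mk₀, (Ext.mk₀_bijective _ _).1.eq_iff] at hx
  refine ⟨CharacterModule.uncurry χ.hom, ?_⟩
  rw [← CharacterModule.homEquiv.symm.injective.eq_iff]
  exact congr_arg ModuleCat.Hom.hom hx

lemma shortExact_map_tensorLeft {N : ModuleCat.{u} R} (h : TorIndependent N S.X₃) :
    (S.map (MonoidalCategory.tensorLeft N)).ShortExact :=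
  ModuleCat.shortComplex_shortExact _
    (lTensor_exact N (exact_hom_of_shortExact hS) hS.moduleCat_surjective_g)
    (h.lTensor_injective hS) (LinearMap.lTensor_surjective N hS.moduleCat_surjective_g)

lemma shortExact_map_tensorRight {M : ModuleCat.{u} R} (h : TorIndependent S.X₃ M) :
    (S.map (MonoidalCategory.tensorRight M)).ShortExact :=
  ModuleCat.shortComplex_shortExact _
    (rTensor_exact M (exact_hom_of_shortExact hS) hS.moduleCat_surjective_g)
    (h.rTensor_injective hS) (LinearMap.rTensor_surjective M hS.moduleCat_surjective_g)

end TorIndependent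

end TorIndependence

section BettiGrowth

open scoped MonoidalCategory

variable {R : Type u} [CommRing R]

lemma range_lTensor_le_smul_top (N : Type*) {X F : Type*} [AddCommGroup N] [AddCommGroup X]
    [AddCommGroup F] [Module R N] [Module R X] [Module R F] {I : Ideal R} {φ : X →ₗ[R] F}
    (hφ : LinearMap.range φ ≤ I • ⊤) : LinearMap.range (φ.lTensor N) ≤ I • ⊤ := by
  rintro _ ⟨z, rfl⟩
  induction z with
  | zero => simp
  | add x y hx hy => rw [map_add]; exact add_mem hx hy
  | tmul n x =>
    have hmap := Submodule.mem_map_of_mem (f := TensorProduct.mk R N F n) (hφ ⟨x, rfl⟩)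
    rw [Submodule.map_smul''] at hmap
    exact smul_mono_right I (le_top (a := Submodule.map _ _)) hmap

variable [IsLocalRing R]

-- Dimension shifting along a free cover of `N` reduces the vanishing to degree zero.
lemma extPrecomp_whiskerLeft_eq_zero {N X F : ModuleCat.{u} R} [Module.Projective R F] {φ : X ⟶ F}
    (hφ : LinearMap.range φ.hom ≤ maximalIdeal R • ⊤) (h : TorIndependent N X) (n : ℕ) :
    extPrecomp (N ◁ φ) (residueModule R) n = 0 := by
  induction n generalizing N with
  | zero => exact extPrecomp_residueModule_zero_eq_zero (range_lTensor_le_smul_top N hφ)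
  | succ n ih =>
    let S := (Finsupp.linearCombination R (id : N → N)).shortComplexKer
    have hS : S.ShortExact :=
      LinearMap.shortExact_shortComplexKer (Finsupp.linearCombination_id_surjective R N)
    have : Module.Free R S.X₂ := inferInstanceAs (Module.Free R (N →₀ R))
    have hSX := TorIndependent.shortExact_map_tensorRight hS (M := X) h
    have hSF := TorIndependent.shortExact_map_tensorRight hS (.of_projective S.X₃ F)
    let Φ := S.mapNatTrans ((MonoidalCategory.curriedTensor (ModuleCat.{u} R)).flip.map φ)
    have : Projective (S.map (MonoidalCategory.tensorRight F)).X₂ :=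
      inferInstanceAs (Projective (ModuleCat.of R (S.X₂ ⊗[R] F)))
    ext x
    obtain ⟨y, rfl⟩ := extConnecting_surjective hSF (residueModule R) n x
    refine (extPrecomp_extConnecting hSX hSF Φ _ n y).trans ?_
    have hzero : extPrecomp Φ.τ₁ (residueModule R) n = 0 := ih (.of_shortExact_left hS h)
    rw [hzero, LinearMap.zero_apply, map_zero]
    rfl

lemma betti_le_betti_tensorObj_of_free (N F : ModuleCat.{u} R) [Module.Free R F] [Nontrivial F]
    (n : ℕ) : betti N n ≤ betti (N ⊗ F) n := by
  let b := Module.Free.chooseBasis R F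
  obtain ⟨a⟩ := b.index_nonempty
  let e : 𝟙_ (ModuleCat.{u} R) ⟶ F := ModuleCat.ofHom (LinearMap.toSpanSingleton R F (b a))
  let p : F ⟶ 𝟙_ (ModuleCat.{u} R) := ModuleCat.ofHom (b.coord a)
  have hep : e ≫ p = 𝟙 _ := by
    ext
    simp [e, p]
  refine betti_le_of_comp_eq_id (i := (ρ_ N).inv ≫ N ◁ e) (p := N ◁ p ≫ (ρ_ N).hom) ?_ n
  rw [Category.assoc, ← MonoidalCategory.whiskerLeft_comp_assoc, hep]
  simp

section MinimalCover

variable {S : ShortComplex (ModuleCat.{u} R)} (hS : S.ShortExact) [Module.Projective R S.X₂]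
  (hker : LinearMap.range S.f.hom ≤ maximalIdeal R • ⊤) {N : ModuleCat.{u} R}
  (h : TorIndependent N S.X₃)
include hS hker h

lemma betti_zero_tensorObj_X₂_le : betti (N ⊗ S.X₂) 0 ≤ betti (N ⊗ S.X₃) 0 :=
  Module.length_le_of_surjective _ <| extPrecomp_surjective_of_eq_zero
    (h.shortExact_map_tensorLeft hS) (residueModule R) 0
    (extPrecomp_whiskerLeft_eq_zero hker (h.of_shortExact_right hS) 0)

lemma betti_succ_tensorObj_X₃ (n : ℕ) :
    betti (N ⊗ S.X₃) (n + 1) = betti (N ⊗ S.X₁) n + betti (N ⊗ S.X₂) (n + 1) := by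
  have hT := h.shortExact_map_tensorLeft hS
  have hzero := extPrecomp_whiskerLeft_eq_zero hker (h.of_shortExact_right hS)
  exact Module.length_eq_add_of_exact _ _ (extConnecting_injective_of_eq_zero hT _ n (hzero n))
    (extPrecomp_surjective_of_eq_zero hT _ (n + 1) (hzero (n + 1)))
    (exact_extConnecting_extPrecomp hT _ n)

end MinimalCover

lemma sum_betti_le_betti_tensorObj [IsNoetherianRing R] {N M : ModuleCat.{u} R}
    [Module.Finite R M] (hM : ∀ n, betti M n ≠ 0) (h : TorIndependent N M) (n : ℕ) :
    ∑ i ∈ Finset.range (n + 1), betti N i ≤ betti (N ⊗ M) n := by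
  obtain ⟨r, π, hπ, hker⟩ := exists_minimal_cover (R := R) M
  let S := π.shortComplexKer
  have hS : S.ShortExact := LinearMap.shortExact_shortComplexKer hπ
  have hSker : LinearMap.range S.f.hom ≤ maximalIdeal R • ⊤ := by simpa [S] using hker
  have : Nontrivial M := by
    by_contra hsub
    rw [not_nontrivial_iff_subsingleton] at hsub
    have := (ModuleCat.isZero_of_subsingleton M).projective
    exact hM 1 (betti_succ_eq_zero_of_projective M 0)
  have : Module.Free R S.X₂ := inferInstanceAs (Module.Free R (Fin r → R))
  have : Nontrivial S.X₂ := hπ.nontrivial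
  have hret := betti_le_betti_tensorObj_of_free N S.X₂
  cases n with
  | zero => simpa using (hret 0).trans (betti_zero_tensorObj_X₂_le hS hSker h)
  | succ n =>
    have hK (n : ℕ) : betti S.X₁ n ≠ 0 := fun h0 ↦
      hM (n + 1) (le_zero_iff.1 (h0 ▸ betti_X₃_succ_le_of_projective hS n))
    have : Module.Finite R S.X₁ := inferInstanceAs (Module.Finite R (LinearMap.ker π))
    rw [Finset.sum_range_succ]
    have ih := sum_betti_le_betti_tensorObj hK (h.of_shortExact_right hS) n
    exact (add_le_add ih (hret (n + 1))).trans (betti_succ_tensorObj_X₃ hS hSker h n).ge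

end BettiGrowth

section RegularLocal

open RingTheory.Sequence

variable {A : Type*} [CommRing A]

lemma exists_isPrime_le_ringKrullDim_quotient {n : ℕ} (h : n ≤ ringKrullDim A) :
    ∃ q : Ideal A, q.IsPrime ∧ n ≤ ringKrullDim (A ⧸ q) := by
  obtain ⟨p, rfl⟩ := Order.le_krullDim_iff.1 h
  refine ⟨p.head.asIdeal, p.head.isPrime, ?_⟩
  have hIci : PrimeSpectrum.zeroLocus (p.head.asIdeal : Set A) = Set.Ici p.head := rfl
  rw [ringKrullDim_quotient, hIci, ← Order.coheight_eq_krullDim_Ici]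
  exact_mod_cast Order.length_le_coheight_head

variable [IsLocalRing A] {x : A}

lemma maximalIdeal_quotient_eq_map (I : Ideal A) [IsLocalRing (A ⧸ I)] :
    maximalIdeal (A ⧸ I) = (maximalIdeal A).map (Ideal.Quotient.mk I) :=
  (map_maximalIdeal_of_surjective _ Ideal.Quotient.mk_surjective).symm

variable [IsNoetherianRing A]

lemma ringKrullDim_le_length {l : List A} (hl : maximalIdeal A = Ideal.ofList l) :
    ringKrullDim A ≤ l.length := by
  classical
  have hfin : {a | a ∈ l}.Finite := l.finite_toSet
  have hcard : {a | a ∈ l}.ncard ≤ l.length := by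
    rw [← List.coe_toFinset, Set.ncard_coe_finset]
    exact l.toFinset_card_le
  refine (ringKrullDim_le_spanFinrank_maximalIdeal A).trans ?_
  rw [hl]
  exact_mod_cast (Submodule.spanFinrank_span_le_ncard_of_finite hfin).trans hcard

lemma ringKrullDim_le_ringKrullDim_quotient_span_singleton_add_one (hx : x ∈ maximalIdeal A) :
    ringKrullDim A ≤ ringKrullDim (A ⧸ Ideal.span {x}) + 1 := by
  have h := ringKrullDim_le_ringKrullDim_quotient_add_card {x}
    (by simpa [ringJacobson_eq_maximalIdeal] using hx)
  rwa [Finset.coe_singleton, Finset.card_singleton, Nat.cast_one] at h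

lemma eq_bot_of_isPrime_of_le_span_singleton {q : Ideal A} [q.IsPrime] (hx : x ∈ maximalIdeal A)
    (hxq : x ∉ q) (hq : q ≤ Ideal.span {x}) : q = ⊥ := by
  refine Submodule.eq_bot_of_le_smul_of_le_jacobson_bot (maximalIdeal A) q
    (IsNoetherian.noetherian q) (fun a ha ↦ ?_) (maximalIdeal_le_jacobson _)
  obtain ⟨b, rfl⟩ := Ideal.mem_span_singleton.1 (hq ha)
  exact Submodule.smul_mem_smul hx ((Ideal.IsPrime.mem_or_mem ‹_› ha).resolve_left hxq)

lemma notMem_and_le_span_singleton_of_ringKrullDim [IsDomain (A ⧸ Ideal.span {x})] {q : Ideal A}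
    [q.IsPrime] (hx : x ∈ maximalIdeal A) {n : ℕ} (hn : ringKrullDim (A ⧸ Ideal.span {x}) ≤ n)
    (hq : (n + 1 : ℕ) ≤ ringKrullDim (A ⧸ q)) : x ∉ q ∧ q ≤ Ideal.span {x} := by
  have hlt : ringKrullDim (A ⧸ Ideal.span {x}) < ringKrullDim (A ⧸ q) :=
    (hn.trans_lt (by exact_mod_cast n.lt_succ_self)).trans_le hq
  refine ⟨fun hxq ↦ hlt.not_ge ?_, fun y hy ↦ by_contra fun hyx ↦ hlt.not_ge ?_⟩
  · have hle : Ideal.span {x} ≤ q := (Ideal.span_singleton_le_iff_mem q).2 hxq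
    exact ringKrullDim_le_of_surjective (Ideal.Quotient.factor hle)
      (Ideal.Quotient.factor_surjective hle)
  · have : Nontrivial (A ⧸ q) := Ideal.Quotient.nontrivial_iff.2 (Ideal.IsPrime.ne_top ‹_›)
    have : IsLocalRing (A ⧸ q) := .of_surjective' _ Ideal.Quotient.mk_surjective
    let xq : A ⧸ q := Ideal.Quotient.mk q x
    have hxq : xq ∈ maximalIdeal (A ⧸ q) := by
      rw [maximalIdeal_quotient_eq_map]
      exact Ideal.mem_map_of_mem _ hx
    refine (ringKrullDim_le_ringKrullDim_quotient_span_singleton_add_one hxq).trans ?_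
    let φ : A ⧸ Ideal.span {x} →+* (A ⧸ q) ⧸ Ideal.span {xq} :=
      Ideal.Quotient.lift _ ((Ideal.Quotient.mk _).comp (Ideal.Quotient.mk q)) fun a ha ↦ by
        obtain ⟨b, rfl⟩ := Ideal.mem_span_singleton.1 ha
        simp [xq, Ideal.Quotient.eq_zero_iff_mem.2 (Ideal.mem_span_singleton_self _)]
    refine ringKrullDim_succ_le_of_surjective φ (Ideal.Quotient.lift_surjective_of_surjective _ _
        (Ideal.Quotient.mk_surjective.comp Ideal.Quotient.mk_surjective))
      (r := Ideal.Quotient.mk _ y) (mem_nonZeroDivisors_of_ne_zero ?_) ?_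
    · rwa [Ne, Ideal.Quotient.eq_zero_iff_mem]
    · simp [φ, Ideal.Quotient.eq_zero_iff_mem.2 hy]

omit [IsLocalRing A] [IsNoetherianRing A] in
lemma isWeaklyRegular_cons_of_quotient_span_singleton [IsDomain A] {l : List A} (hx : x ≠ 0)
    (hl : IsWeaklyRegular (A ⧸ Ideal.span {x}) (l.map (Ideal.Quotient.mk (Ideal.span {x})))) :
    IsWeaklyRegular A (x :: l) := by
  refine (isWeaklyRegular_cons_iff _ _ _).2 ⟨IsSMulRegular.of_ne_zero hx, ?_⟩
  refine (LinearEquiv.isWeaklyRegular_congr (Submodule.quotEquivOfEq _ _ ?_) l).2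
    ((isWeaklyRegular_map_algebraMap_iff (A ⧸ Ideal.span {x}) _ l).1 hl)
  rw [← Submodule.ideal_span_singleton_smul, smul_eq_mul, Ideal.mul_top]

lemma isDomain_and_isWeaklyRegular_of_length_le_ringKrullDim {A : Type*} [CommRing A]
    [IsLocalRing A] [IsNoetherianRing A] {l : List A} (hl : maximalIdeal A = Ideal.ofList l)
    (hdim : l.length ≤ ringKrullDim A) : IsDomain A ∧ IsWeaklyRegular A l := by
  induction hn : l.length generalizing A with
  | zero =>
    obtain rfl := List.length_eq_zero_iff.1 hn
    rw [Ideal.ofList_nil] at hl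
    exact ⟨(isField_iff_maximalIdeal_eq.2 hl).isDomain, IsWeaklyRegular.nil _ _⟩
  | succ n ih =>
    obtain ⟨x, t, rfl⟩ := List.exists_cons_of_length_eq_add_one hn
    obtain rfl : t.length = n := by simpa using hn
    have hx : x ∈ maximalIdeal A := hl ▸ Ideal.subset_span (by simp)
    have : Nontrivial (A ⧸ Ideal.span {x}) :=
      Ideal.Quotient.nontrivial_iff.2 ((Ideal.span_singleton_ne_top hx))
    have : IsLocalRing (A ⧸ Ideal.span {x}) := .of_surjective' _ Ideal.Quotient.mk_surjective
    have hquot : maximalIdeal (A ⧸ Ideal.span {x}) =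
        Ideal.ofList (t.map (Ideal.Quotient.mk (Ideal.span {x}))) := by
      rw [maximalIdeal_quotient_eq_map, hl, Ideal.map_ofList]
      simp [Ideal.ofList_cons]
    have hdim' : (t.length : WithBot ℕ∞) ≤ ringKrullDim (A ⧸ Ideal.span {x}) := by
      have h := hdim.trans (ringKrullDim_le_ringKrullDim_quotient_span_singleton_add_one hx)
      rw [hn, Nat.cast_add_one] at h
      exact ENat.WithBot.add_le_add_one_right_iff.1 h
    obtain ⟨_, ht⟩ := ih hquot (by simpa using hdim') (by simp)
    rw [hn] at hdim
    obtain ⟨q, _, hq⟩ := exists_isPrime_le_ringKrullDim_quotient hdim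
    obtain ⟨hxq, hle⟩ := notMem_and_le_span_singleton_of_ringKrullDim hx
      (by simpa using ringKrullDim_le_length hquot) hq
    obtain rfl := eq_bot_of_isPrime_of_le_span_singleton hx hxq hle
    have : IsDomain A := .of_bot_isPrime A
    exact ⟨this, isWeaklyRegular_cons_of_quotient_span_singleton (by simpa using hxq) ht⟩

end RegularLocal

section GlobalDimension

open RingTheory.Sequence

variable {A : Type u} [CommRing A]

lemma subsingleton_ext_characterObj (N X : ModuleCat.{u} A) (m n : ℕ)
    [HasProjectiveDimensionLT N (m + 1)] :
    Subsingleton (Ext X (characterObj N) (m + n + 1)) := by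
  induction m generalizing N with
  | zero =>
    have : Module.Projective A N := (IsProjective.iff_projective N).2
      (projective_iff_hasProjectiveDimensionLT_one.2 ‹_›)
    have := injective_characterObj N
    exact subsingleton_of_forall_eq 0 Ext.eq_zero_of_injective
  | succ m ih =>
    let S := (Finsupp.linearCombination A (id : N → N)).shortComplexKer
    have hS : S.ShortExact :=
      LinearMap.shortExact_shortComplexKer (Finsupp.linearCombination_id_surjective A N)
    have : Projective S.X₂ := inferInstanceAs (Projective (ModuleCat.of A (N →₀ A)))
    have : Module.Projective A S.X₂ := (IsProjective.iff_projective _).2 inferInstance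
    have : HasProjectiveDimensionLT S.X₁ (m + 1) :=
      (hS.hasProjectiveDimensionLT_X₃_iff m inferInstance).1 ‹_›
    have := injective_characterObj S.X₂
    have := ih S.X₁
    rw [add_right_comm m 1 n]
    refine subsingleton_of_forall_eq 0 fun x ↦ ?_
    obtain ⟨y, rfl⟩ := Ext.covariant_sequence_exact₁ X (shortExact_characterShortComplex hS) x
      (Ext.eq_zero_of_injective _) rfl
    rw [Subsingleton.elim y 0, Ext.zero_comp]

variable [IsLocalRing A]

variable (A) in
lemma nonempty_retract_residueModule_characterObj :
    Nonempty (Retract (residueModule A) (characterObj (residueModule A))) := by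
  obtain ⟨c, hc⟩ := CharacterModule.exists_character_apply_ne_zero_of_ne_zero
    (one_ne_zero (α := ResidueField A))
  have : IsScalarTower A (ResidueField A) (CharacterModule (ResidueField A)) :=
    ⟨fun a b c ↦ by ext x; simp [mul_comm, mul_left_comm, Algebra.smul_def]⟩
  let i := LinearMap.toSpanSingleton (ResidueField A) (CharacterModule (ResidueField A)) c
  have hi : LinearMap.ker i = ⊥ := LinearMap.ker_toSpanSingleton _ fun h ↦ hc (by rw [h]; rfl)
  obtain ⟨p, hp⟩ := LinearMap.exists_leftInverse_of_injective i hi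
  exact ⟨{
    i := ModuleCat.ofHom (i.restrictScalars A)
    r := ModuleCat.ofHom (p.restrictScalars A)
    retract := by
      ext x
      exact LinearMap.congr_fun hp x }⟩

variable [IsNoetherianRing A]

lemma hasProjectiveDimensionLT_of_residueModule (m : ℕ)
    [HasProjectiveDimensionLT (residueModule A) (m + 1)] (X : ModuleCat.{u} A)
    [Module.Finite A X] : HasProjectiveDimensionLT X (m + 1) := by
  refine hasProjectiveDimensionLT_of_betti_eq_zero X (m + 1) (betti_eq_zero_iff.2 ?_)
  obtain ⟨h⟩ := nonempty_retract_residueModule_characterObj A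
  have := subsingleton_ext_characterObj (residueModule A) X m 0
  refine subsingleton_of_forall_eq 0 fun x ↦ ?_
  rw [← Ext.comp_mk₀_id x, ← h.retract, ← Ext.mk₀_comp_mk₀,
    ← Ext.comp_assoc x _ _ rfl rfl (by simp),
    Subsingleton.elim (x.comp (Ext.mk₀ h.i) (add_zero _)) 0, Ext.zero_comp]

lemma hasProjectiveDimensionLT_quotient_ofList {l : List A} (hl : IsWeaklyRegular A l)
    (hmem : ∀ r ∈ l, r ∈ maximalIdeal A) :
    HasProjectiveDimensionLT (ModuleCat.of A (A ⧸ Ideal.ofList l)) (l.length + 1) := by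
  have h := ModuleCat.projectiveDimension_quotient_eq_add_length_of_isWeaklyRegular
    (ModuleCat.of A A) l hl hmem
  rw [ModuleCat.projectiveDimension_eq_zero_of_projective (ModuleCat.of A A), zero_add] at h
  have hlt := (projectiveDimension_le_iff _ _).1 h.le
  have e : (A ⧸ (Ideal.ofList l • ⊤ : Ideal A)) ≃ₗ[A] A ⧸ Ideal.ofList l :=
    Submodule.quotEquivOfEq _ _ (by rw [smul_eq_mul, Ideal.mul_top])
  exact ModuleCat.hasProjectiveDimensionLE_of_linearEquiv
    (M := ModuleCat.of A (A ⧸ (Ideal.ofList l • ⊤ : Ideal A)))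
    (N := ModuleCat.of A (A ⧸ Ideal.ofList l)) e l.length

lemma hasProjectiveDimensionLT_of_isWeaklyRegular {l : List A} (hl : IsWeaklyRegular A l)
    (hmax : maximalIdeal A = Ideal.ofList l) (X : ModuleCat.{u} A) [Module.Finite A X] :
    HasProjectiveDimensionLT X (l.length + 1) := by
  have hk : HasProjectiveDimensionLT (residueModule A) (l.length + 1) := by
    have h := hasProjectiveDimensionLT_quotient_ofList hl fun r hr ↦ hmax ▸ Ideal.subset_span hr
    rwa [← hmax] at h
  exact hasProjectiveDimensionLT_of_residueModule l.length X

lemma IsRegularLocal.exists_hasProjectiveDimensionLT {Q : Type u} [CommRing Q] [IsLocalRing Q]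
    (hQ : IsRegularLocal Q) : ∃ d : ℕ, ringKrullDim Q = d ∧
      ∀ (X : ModuleCat.{u} Q) [Module.Finite Q X], HasProjectiveDimensionLT X (d + 1) := by
  obtain ⟨_, s, hs, hdim⟩ := hQ
  have hmax : maximalIdeal Q = Ideal.ofList s.toList := by simp [← hs, Ideal.ofList]
  have hreg := (isDomain_and_isWeaklyRegular_of_length_le_ringKrullDim hmax
    (by simpa using hdim.le)).2
  rw [← Finset.length_toList] at hdim
  exact ⟨s.toList.length, hdim.symm, hasProjectiveDimensionLT_of_isWeaklyRegular hreg hmax⟩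

end GlobalDimension

section Depth

open RingTheory.Sequence

lemma exists_isRegular_of_moduleDepth_ne_top {A X : Type u} [CommRing A] [IsLocalRing A]
    [AddCommGroup X] [Nontrivial X] [Module A X] (h : moduleDepth A X ≠ ⊤) :
    ∃ rs : List A, moduleDepth A X = rs.length ∧ (∀ x ∈ rs, x ∈ maximalIdeal A) ∧
      IsRegular X rs := by
  have : Nonempty {n : ℕ∞ | ∃ rs : List A, n = (rs.length : ℕ∞) ∧
      (∀ x ∈ rs, x ∈ maximalIdeal A) ∧ IsRegular X rs} :=
    ⟨0, [], by simp, by simp, IsRegular.nil _ _⟩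
  exact ENat.sSup_mem_of_nonempty_of_lt_top h.lt_top

lemma exists_isWeaklyRegular_map_eq {A B : Type*} [CommRing A] [IsLocalRing A] [CommRing B]
    [IsLocalRing B] [Algebra A B] (hsurj : Function.Surjective (algebraMap A B)) {X : Type*}
    [AddCommGroup X] [Module A X] [Module B X] [IsScalarTower A B X] {rs : List B}
    (hrs : IsWeaklyRegular X rs) (hmem : ∀ x ∈ rs, x ∈ maximalIdeal B) :
    ∃ l : List A, l.map (algebraMap A B) = rs ∧ IsWeaklyRegular X l ∧
      ∀ x ∈ l, x ∈ maximalIdeal A := by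
  obtain ⟨l, rfl⟩ := List.map_surjective_iff.2 hsurj rs
  refine ⟨l, rfl, (isWeaklyRegular_map_algebraMap_iff B X l).1 hrs, fun x hx hu ↦ ?_⟩
  exact hmem _ (List.mem_map_of_mem hx) (hu.map _)

lemma hasProjectiveDimensionLT_of_isWeaklyRegular_module {A : Type u} [CommRing A] [IsLocalRing A]
    [IsNoetherianRing A] {X : ModuleCat.{u} A} [Module.Finite A X] [Nontrivial X] {l : List A}
    (hl : IsWeaklyRegular X l) (hmem : ∀ x ∈ l, x ∈ maximalIdeal A) {n : ℕ}
    [h : HasProjectiveDimensionLT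
      (ModuleCat.of A (X ⧸ Ideal.ofList l • (⊤ : Submodule A X))) (n + l.length + 1)] :
    HasProjectiveDimensionLT X (n + 1) := by
  have hle := (projectiveDimension_le_iff _ (n + l.length)).2 h
  rw [ModuleCat.projectiveDimension_quotient_eq_add_length_of_isWeaklyRegular X l hl hmem,
    Nat.cast_add, ENat.WithBot.add_le_add_natCast_right_iff] at hle
  exact (projectiveDimension_le_iff X n).1 hle

lemma hasProjectiveDimensionLT_of_moduleDepth_eq_ringKrullDim {Q : Type u} [CommRing Q]
    [IsLocalRing Q] (hQ : IsRegularLocal Q) {f : List Q} (hf : IsRegular Q f)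
    [IsLocalRing (Q ⧸ Ideal.ofList f)] (X : Type u) [AddCommGroup X] [Nontrivial X] [Module Q X]
    [Module (Q ⧸ Ideal.ofList f) X] [IsScalarTower Q (Q ⧸ Ideal.ofList f) X]
    [Module.Finite (Q ⧸ Ideal.ofList f) X]
    (hX : (moduleDepth (Q ⧸ Ideal.ofList f) X : WithBot ℕ∞) =
      ringKrullDim (Q ⧸ Ideal.ofList f)) :
    HasProjectiveDimensionLT (ModuleCat.of Q X) (f.length + 1) := by
  obtain ⟨d, hd, hpd⟩ := hQ.exists_hasProjectiveDimensionLT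
  have := hQ.1
  have : Module.Finite Q X := .trans (Q ⧸ Ideal.ofList f) X
  have hdepth : moduleDepth (Q ⧸ Ideal.ofList f) X + f.length = d := by
    have hadd := ringKrullDim_add_length_eq_ringKrullDim_of_isRegular f hf
    rw [← hX, hd] at hadd
    exact_mod_cast hadd
  obtain ⟨rs, hlen, hmem, hrs⟩ := exists_isRegular_of_moduleDepth_ne_top
    (A := Q ⧸ Ideal.ofList f) (X := X) fun h ↦ by simp [h] at hdepth
  obtain ⟨l, rfl, hl, hlmem⟩ :=
    exists_isWeaklyRegular_map_eq (Ideal.Quotient.mk_surjective (I := Ideal.ofList f)) hrs.1 hmem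
  have hdim : f.length + l.length = d := by
    rw [hlen, List.length_map, add_comm] at hdepth
    exact_mod_cast hdepth
  subst hdim
  have := hpd (ModuleCat.of Q (X ⧸ Ideal.ofList l • (⊤ : Submodule Q X)))
  exact hasProjectiveDimensionLT_of_isWeaklyRegular_module (X := ModuleCat.of Q X) hl hlmem

end Depth

section BaseChange

variable {A : Type u} [CommRing A] (B : Type u) [CommRing B] [Algebra A B]

/-- The base change to `B` of a short complex of `A`-modules. -/
noncomputable abbrev baseChangeShortComplex (S : ShortComplex (ModuleCat.{u} A)) :
    ShortComplex (ModuleCat.{u} B) :=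
  ModuleCat.shortComplexOfCompEqZero (S.f.hom.baseChange B) (S.g.hom.baseChange B) (by
    rw [← LinearMap.baseChange_comp, ← ModuleCat.hom_comp, S.zero, ModuleCat.hom_zero,
      LinearMap.baseChange_zero])

variable {B}

lemma shortExact_baseChangeShortComplex {S : ShortComplex (ModuleCat.{u} A)} (hS : S.ShortExact)
    (h : TorIndependent (ModuleCat.of A B) S.X₃) : (baseChangeShortComplex B S).ShortExact :=
  ModuleCat.shortComplex_shortExact _
    (lTensor_exact B (exact_hom_of_shortExact hS) hS.moduleCat_surjective_g)
    (h.lTensor_injective hS) (LinearMap.lTensor_surjective B hS.moduleCat_surjective_g)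

lemma HasReducibleComplexity.baseChange {j : ℕ} {X : ModuleCat.{u} A}
    (hX : HasReducibleComplexity j X) (h : TorIndependent (ModuleCat.of A B) X) :
    HasReducibleComplexity j (ModuleCat.of B (B ⊗[A] X)) := by
  induction hX with
  | of_projective _ _ =>
    exact .of_projective (Module.Finite.base_change ..) (Module.Projective.tensorProduct ..)
  | @of_reduction _ X X' K F _ _ _ _ _ _ hX hK _ hproj _ ih =>
    have : Projective F := (IsProjective.iff_projective F).1 hproj
    have hBK : TorIndependent (ModuleCat.of A B) K := TorIndependent.of_shortExact_right hK h
    have hBX' : TorIndependent (ModuleCat.of A B) X' := fun n ↦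
      subsingleton_ext_X₂ hX _ _ (h n) (hBK n)
    exact .of_reduction (shortExact_baseChangeShortComplex hX hBK)
      (shortExact_baseChangeShortComplex hK h) (Module.Finite.base_change ..)
      (Module.Projective.tensorProduct ..) (ih hBX')

lemma TorIndependent.of_hasProjectiveDimensionLT_two (N : ModuleCat.{u} A)
    [HasProjectiveDimensionLT N 2] {S : ShortComplex (ModuleCat.{u} A)} (hS : S.ShortExact)
    [Projective S.X₂] : TorIndependent N S.X₁ := fun n ↦ by
  rw [subsingleton_ext_X₁_iff hS, show n + 2 = 1 + n + 1 by lia]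
  exact subsingleton_ext_characterObj N S.X₃ 1 n

end BaseChange

section HypersurfaceSection

variable {A B : Type u} [CommRing A] [CommRing B] [Algebra A B] {a : A}
  (hsurj : Function.Surjective (algebraMap A B))
  (hker : RingHom.ker (algebraMap A B) = Ideal.span {a})

include hker in
lemma exact_lsmul_algebraLinearMap :
    Function.Exact (LinearMap.lsmul A A a) (Algebra.linearMap A B) := fun b ↦ by
  change b ∈ RingHom.ker (algebraMap A B) ↔ _
  simp [hker, Ideal.mem_span_singleton', mul_comm]

include hker in
lemma smul_eq_zero_of_ker_eq_span_singleton {X : Type*} [AddCommGroup X] [Module A X] [Module B X]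
    [IsScalarTower A B X] (x : X) : a • x = 0 := by
  have ha : algebraMap A B a = 0 := by
    rw [← RingHom.mem_ker, hker]
    exact Ideal.mem_span_singleton_self a
  rw [← algebraMap_smul B, ha, zero_smul]

include hsurj hker

lemma hasProjectiveDimensionLT_two_of_ker_eq_span_singleton (ha : IsSMulRegular A a) :
    HasProjectiveDimensionLT (ModuleCat.of A B) 2 := by
  have hexact := exact_lsmul_algebraLinearMap hker
  have hS := ModuleCat.shortComplex_shortExact
    (ModuleCat.shortComplexOfCompEqZero _ _ hexact.linearMap_comp_eq_zero) hexact ha hsurj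
  have hA : Projective (ModuleCat.of A A) := (IsProjective.iff_projective _).1 inferInstance
  have hpd := projective_iff_hasProjectiveDimensionLT_one.1 hA
  exact hS.hasProjectiveDimensionLT_X₃ 1 hpd (hasProjectiveDimensionLT_of_ge _ 1 2 one_le_two)

lemma one_tmul_eq_zero_iff {N : Type*} [AddCommGroup N] [Module A N] (x : N) :
    (1 : B) ⊗ₜ[A] x = 0 ↔ ∃ y : N, a • y = x := by
  have h := rTensor_exact N (exact_lsmul_algebraLinearMap hker) hsurj (1 ⊗ₜ x)
  rw [LinearMap.rTensor_tmul, Algebra.linearMap_apply, map_one] at h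
  rw [h]
  constructor
  · rintro ⟨z, hz⟩
    obtain ⟨y, rfl⟩ := TensorProduct.mk_surjective A N A Function.surjective_id z
    exact ⟨y, by simpa using congr_arg (TensorProduct.lid A N) hz⟩
  · rintro ⟨y, rfl⟩
    exact ⟨1 ⊗ₜ y, by simp [TensorProduct.smul_tmul']⟩

variable {X F : Type u} [AddCommGroup X] [Module A X] [Module B X] [IsScalarTower A B X]
  [AddCommGroup F] [Module A F] {π : F →ₗ[A] X}

-- The snake lemma for multiplication by `a` on `0 → ker π → F → X → 0`: as `a` kills `X`, the map
-- `g` is the connecting map from `X` to `ker π ⧸ a • ker π`.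
lemma exists_injective_baseChange_ker (hπ : Function.Surjective π) (ha : IsSMulRegular F a) :
    ∃ g : X →ₗ[B] B ⊗[A] LinearMap.ker π, Function.Injective g ∧
      ∀ (e : F) (he : a • e ∈ LinearMap.ker π), g (π e) = 1 ⊗ₜ ⟨a • e, he⟩ := by
  have hmem (e : F) : a • e ∈ LinearMap.ker π := by
    rw [LinearMap.mem_ker, map_smul, smul_eq_zero_of_ker_eq_span_singleton hker]
  let δ : F →ₗ[A] B ⊗[A] LinearMap.ker π :=
    TensorProduct.mk A B _ 1 ∘ₗ (LinearMap.lsmul A F a).codRestrict (LinearMap.ker π) hmem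
  have hδ : LinearMap.ker δ = LinearMap.ker π := by
    ext e
    refine (one_tmul_eq_zero_iff hsurj hker _).trans ⟨?_, fun he ↦ ⟨⟨e, he⟩, rfl⟩⟩
    rintro ⟨y, hy⟩
    rw [← ha (congr_arg Subtype.val hy)]
    exact y.2
  let g : X →ₗ[A] B ⊗[A] LinearMap.ker π :=
    (LinearMap.ker π).liftQ δ hδ.ge ∘ₗ (π.quotKerEquivOfSurjective hπ).symm
  have hg (e : F) : g (π e) = δ e := by
    have hsymm : (π.quotKerEquivOfSurjective hπ).symm (π e) = Submodule.Quotient.mk e := by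
      rw [LinearEquiv.symm_apply_eq, LinearMap.quotKerEquivOfSurjective_apply_mk]
    rw [LinearMap.comp_apply, LinearEquiv.coe_coe, hsymm, Submodule.liftQ_apply]
  refine ⟨g.extendScalarsOfSurjective hsurj, (injective_iff_map_eq_zero _).2 fun x hx ↦ ?_,
    fun e _ ↦ hg e⟩
  obtain ⟨e, rfl⟩ := hπ x
  exact hδ.le ((hg e).symm.trans hx)

lemma exact_baseChange_subtype_ker (hπ : Function.Surjective π)
    {g : X →ₗ[B] B ⊗[A] LinearMap.ker π}
    (hg : ∀ (e : F) (he : a • e ∈ LinearMap.ker π), g (π e) = 1 ⊗ₜ ⟨a • e, he⟩) :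
    Function.Exact g ((LinearMap.ker π).subtype.baseChange B) := by
  intro z
  constructor
  · intro hz
    obtain ⟨⟨k, hk⟩, rfl⟩ := TensorProduct.mk_surjective A _ B hsurj z
    obtain ⟨e, rfl⟩ := (one_tmul_eq_zero_iff hsurj hker k).1 hz
    exact ⟨π e, hg e hk⟩
  · rintro ⟨x, rfl⟩
    obtain ⟨e, rfl⟩ := hπ x
    have he : a • e ∈ LinearMap.ker π := by
      rw [LinearMap.mem_ker, map_smul, smul_eq_zero_of_ker_eq_span_singleton hker]
    rw [hg e he, LinearMap.baseChange_tmul]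
    exact (one_tmul_eq_zero_iff hsurj hker _).2 ⟨e, rfl⟩

omit hker in
lemma exact_baseChange_subtype_ker_liftBaseChange :
    Function.Exact ((LinearMap.ker π).subtype.baseChange B) (LinearMap.liftBaseChange B π) := by
  intro z
  constructor
  · intro hz
    obtain ⟨e, rfl⟩ := TensorProduct.mk_surjective A F B hsurj z
    exact ⟨1 ⊗ₜ ⟨e, by simpa using hz⟩, rfl⟩
  · rintro ⟨z, rfl⟩
    obtain ⟨k, rfl⟩ := TensorProduct.mk_surjective A _ B hsurj z
    simp

lemma HasReducibleComplexity.succ_of_baseChange_ker [Module.Finite A F] [Module.Projective A F]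
    (hπ : Function.Surjective π) (ha : IsSMulRegular F a) {j : ℕ}
    (h : HasReducibleComplexity j (ModuleCat.of B (B ⊗[A] LinearMap.ker π))) :
    HasReducibleComplexity (j + 1) (ModuleCat.of B X) := by
  obtain ⟨g, hg_inj, hg⟩ := exists_injective_baseChange_ker hsurj hker hπ ha
  have hρ : Function.Surjective (LinearMap.liftBaseChange B π) := fun x ↦ by
    obtain ⟨e, rfl⟩ := hπ x
    exact ⟨1 ⊗ₜ e, by simp⟩
  exact .of_exact hg_inj (exact_baseChange_subtype_ker hsurj hker hπ hg)
    (exact_baseChange_subtype_ker_liftBaseChange hsurj) hρ h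

end HypersurfaceSection

section CompleteIntersection

open RingTheory.Sequence

lemma projective_of_algebraMap_surjective {Q B X : Type*} [CommRing Q] [CommRing B]
    [Algebra Q B] [AddCommGroup X] [Module Q X] [Module B X] [IsScalarTower Q B X]
    (hsurj : Function.Surjective (algebraMap Q B)) [Module.Projective Q X] :
    Module.Projective B X := by
  let p := Finsupp.linearCombination B (id : X → X)
  obtain ⟨s, hs⟩ := Module.projective_lifting_property (p.restrictScalars Q) LinearMap.id
    (Finsupp.linearCombination_id_surjective B X)
  exact .of_split (s.extendScalarsOfSurjective hsurj) p
    (LinearMap.ext fun x ↦ LinearMap.congr_fun hs x)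

lemma hasProjectiveDimensionLT_pi_fin {Q : Type u} [CommRing Q] (X : Type u) [AddCommGroup X]
    [Module Q X] (m : ℕ) [HasProjectiveDimensionLT (ModuleCat.of Q X) m] (n : ℕ) :
    HasProjectiveDimensionLT (ModuleCat.of Q (Fin n → X)) m := by
  induction n with
  | zero =>
    have := (ModuleCat.isZero_of_subsingleton
      (ModuleCat.of Q (Fin 0 → X))).hasProjectiveDimensionLT_zero
    exact hasProjectiveDimensionLT_of_ge _ 0 m (Nat.zero_le m)
  | succ n _ =>
    exact hasProjectiveDimensionLT_of_iso (ModuleCat.biprodIsoProd (.of Q X) (.of Q (Fin n → X)) ≪≫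
      (Fin.consLinearEquiv Q fun _ : Fin (n + 1) ↦ X).toModuleIso) m

lemma hasProjectiveDimensionLT_ker {Q A : Type u} [CommRing Q] [CommRing A] [Algebra Q A]
    {X : Type u} [AddCommGroup X] [Module Q X] [Module A X] [IsScalarTower Q A X] {n : ℕ}
    {π : (Fin n → A) →ₗ[A] X} (hπ : Function.Surjective π) {m : ℕ}
    [HasProjectiveDimensionLT (ModuleCat.of Q A) m]
    (hX : HasProjectiveDimensionLT (ModuleCat.of Q X) (m + 1)) :
    HasProjectiveDimensionLT (ModuleCat.of Q (LinearMap.ker π)) m :=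
  (LinearMap.shortExact_shortComplexKer (f := π.restrictScalars Q)
    hπ).hasProjectiveDimensionLT_X₁ m (hasProjectiveDimensionLT_pi_fin A m n) hX

variable {Q : Type u} [CommRing Q] {l : List Q} {a : Q}

lemma isSMulRegular_quotient_ofList (h : IsWeaklyRegular Q (l ++ [a])) :
    IsSMulRegular (Q ⧸ Ideal.ofList l) (algebraMap Q (Q ⧸ Ideal.ofList l) a) := by
  have ha := (isWeaklyRegular_singleton_iff _ _).1 ((isWeaklyRegular_append_iff Q l [a]).1 h).2
  let e : (Q ⧸ (Ideal.ofList l • ⊤ : Ideal Q)) ≃ₗ[Q] Q ⧸ Ideal.ofList l :=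
    Submodule.quotEquivOfEq _ _ (by rw [smul_eq_mul, Ideal.mul_top])
  exact fun x y hxy ↦ (e.isSMulRegular_congr a).1 ha (by simpa only [algebraMap_smul] using hxy)

lemma ker_algebraMap_quotient_ofList {B : Type*} [CommRing B] [Algebra Q B]
    [Algebra (Q ⧸ Ideal.ofList l) B] [IsScalarTower Q (Q ⧸ Ideal.ofList l) B]
    (hker : RingHom.ker (algebraMap Q B) = Ideal.ofList (l ++ [a])) :
    RingHom.ker (algebraMap (Q ⧸ Ideal.ofList l) B) =
      Ideal.span {algebraMap Q (Q ⧸ Ideal.ofList l) a} := by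
  have hmap := Ideal.map_comap_of_surjective (algebraMap Q (Q ⧸ Ideal.ofList l))
    Ideal.Quotient.mk_surjective (RingHom.ker (algebraMap (Q ⧸ Ideal.ofList l) B))
  rw [← hmap, RingHom.comap_ker, ← IsScalarTower.algebraMap_eq, hker, Ideal.ofList_append,
    Ideal.map_sup, Ideal.Quotient.algebraMap_eq, Ideal.map_quotient_self, bot_sup_eq,
    Ideal.ofList_singleton, Ideal.map_span, Set.image_singleton]

lemma hasReducibleComplexity_of_hasProjectiveDimensionLT [IsLocalRing Q] [IsNoetherianRing Q]
    (hl : IsWeaklyRegular Q l) (hmem : ∀ r ∈ l, r ∈ maximalIdeal Q) (B : Type u) [CommRing B]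
    [Algebra Q B] (hsurj : Function.Surjective (algebraMap Q B))
    (hker : RingHom.ker (algebraMap Q B) = Ideal.ofList l) (X : Type u) [AddCommGroup X]
    [Module Q X] [Module B X] [IsScalarTower Q B X] [Module.Finite B X]
    (hX : HasProjectiveDimensionLT (ModuleCat.of Q X) (l.length + 1)) :
    HasReducibleComplexity l.length (ModuleCat.of B X) := by
  induction l using List.reverseRecOn generalizing B X with
  | nil =>
    have : Module.Projective Q X := (IsProjective.iff_projective X).2
      (projective_iff_hasProjectiveDimensionLT_one.2 hX)
    exact .of_projective ‹_› (projective_of_algebraMap_surjective (Q := Q) hsurj)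
  | append_singleton l a ih =>
    have hl' : IsWeaklyRegular Q l := ((isWeaklyRegular_append_iff Q l [a]).1 hl).1
    have hmem' : ∀ r ∈ l, r ∈ maximalIdeal Q := fun r hr ↦ hmem r (List.mem_append_left _ hr)
    have hle : Ideal.ofList l ≤ RingHom.ker (algebraMap Q B) := by
      rw [hker, Ideal.ofList_append]
      exact le_sup_left
    let A := Q ⧸ Ideal.ofList l
    let _ : Algebra A B := (Ideal.Quotient.lift (Ideal.ofList l) (algebraMap Q B) hle).toAlgebra
    have : IsScalarTower Q A B := .of_algebraMap_eq fun _ ↦ rfl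
    let _ : Module A X := Module.compHom X (algebraMap A B)
    have : IsScalarTower A B X := .of_algebraMap_smul fun _ _ ↦ rfl
    have : IsScalarTower Q A X := .of_algebraMap_smul fun q x ↦ algebraMap_smul B q x
    have hsurjA : Function.Surjective (algebraMap A B) := .of_comp (g := algebraMap Q A) hsurj
    have hkerA := ker_algebraMap_quotient_ofList hker
    have ha := isSMulRegular_quotient_ofList hl
    have : Module.Finite A B := .of_surjective (Algebra.linearMap A B) hsurjA
    have : Module.Finite A X := .trans B X
    obtain ⟨n, π, hπ⟩ := Module.Finite.exists_fin' A X
    rw [List.length_append, List.length_singleton] at hX ⊢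
    have := hasProjectiveDimensionLT_quotient_ofList hl' hmem'
    have hred := ih hl' hmem' A Ideal.Quotient.mk_surjective Ideal.mk_ker (LinearMap.ker π)
      (hasProjectiveDimensionLT_ker hπ hX)
    have := hasProjectiveDimensionLT_two_of_ker_eq_span_singleton hsurjA hkerA ha
    have : Projective π.shortComplexKer.X₂ :=
      (IsProjective.iff_projective (ModuleCat.of A (Fin n → A))).1 inferInstance
    exact .succ_of_baseChange_ker hsurjA hkerA hπ (IsSMulRegular.pi fun _ ↦ ha) (hred.baseChange
      (.of_hasProjectiveDimensionLT_two _ (LinearMap.shortExact_shortComplexKer hπ)))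

end CompleteIntersection

section TensorProducts

variable {R : Type u} [CommRing R] (M : ℕ → ModuleCat.{u} R)

lemma finite_tensorUpTo (i : ℕ) (h : ∀ j ≤ i, Module.Finite R (M j)) :
    Module.Finite R (tensorUpTo R M i) := by
  induction i with
  | zero => exact h 0 le_rfl
  | succ i ih =>
    have := ih fun j hj ↦ h j (by lia)
    have := h (i + 1) le_rfl
    exact inferInstanceAs (Module.Finite R (tensorUpTo R M i ⊗[R] M (i + 1)))

variable {M}

lemma HasReducibleComplexity.torIndependent {j : ℕ} {N X : ModuleCat.{u} R}
    (hX : HasReducibleComplexity j X)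
    (h : {n : ℕ | ¬ IsZero (((Tor (ModuleCat.{u} R) n).obj N).obj X)}.Finite) :
    TorIndependent N X := by
  refine hX.subsingleton_ext _ ?_
  obtain ⟨b, hb⟩ := h.bddAbove
  filter_upwards [Filter.eventually_gt_atTop b] with n hn
  obtain ⟨n, rfl⟩ := Nat.exists_eq_add_of_le' (Nat.one_le_of_lt hn)
  exact subsingleton_ext_characterObj_of_isZero_tor (not_not.1 fun h ↦ hn.not_ge (hb h))

variable [IsLocalRing R] [IsNoetherianRing R]

lemma multichoose_le_betti_tensorUpTo (i : ℕ) (hfin : ∀ j ≤ i, Module.Finite R (M j))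
    (hM : ∀ j ≤ i, ∀ n, betti (M j) n ≠ 0)
    (htor : ∀ j < i, TorIndependent (tensorUpTo R M j) (M (j + 1))) (n : ℕ) :
    ((i + 1).multichoose n : ℕ∞) ≤ betti (tensorUpTo R M i) n := by
  induction i generalizing n with
  | zero =>
    rw [Nat.multichoose_one, Nat.cast_one, Order.one_le_iff_ne_zero]
    exact hM 0 le_rfl n
  | succ i ih =>
    have := hfin (i + 1) le_rfl
    rw [← sum_range_multichoose_eq_multichoose_succ, Nat.cast_sum]
    calc ∑ k ∈ Finset.range (n + 1), ((i + 1).multichoose k : ℕ∞)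
      _ ≤ ∑ k ∈ Finset.range (n + 1), betti (tensorUpTo R M i) k :=
        Finset.sum_le_sum fun k _ ↦ ih (fun j hj ↦ hfin j (by lia)) (fun j hj ↦ hM j (by lia))
          (fun j hj ↦ htor j (by lia)) k
      _ ≤ betti (tensorUpTo R M (i + 1)) n :=
        sum_betti_le_betti_tensorObj (hM (i + 1) le_rfl) (htor i i.lt_succ_self) n

theorem exists_infinite_tor_tensorUpTo {c C d : ℕ}
    (hred : ∀ i ≤ c, ∃ j, HasReducibleComplexity j (M i))
    (hfree : ∀ i ≤ c, ¬ Module.Free R (M i))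
    (hC : ∀ n, betti (tensorUpTo R M c) (n + d) ≤ (C * c.multichoose n : ℕ)) :
    ∃ i : ℕ, 1 ≤ i ∧ i ≤ c ∧ {n : ℕ | ¬ IsZero (((Tor (ModuleCat.{u} R) n).obj
      (tensorUpTo R M (i - 1))).obj (M i))}.Infinite := by
  by_contra! hfinite
  choose! j hred using hred
  have htor (i : ℕ) (hi : i < c) : TorIndependent (tensorUpTo R M i) (M (i + 1)) :=
    (hred (i + 1) hi).torIndependent (hfinite (i + 1) (by lia) hi)
  have hlower := multichoose_le_betti_tensorUpTo c (fun i hi ↦ (hred i hi).finite)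
    (fun i hi ↦ (hred i hi).betti_ne_zero (hfree i hi)) htor
  obtain ⟨n, hn⟩ := exists_mul_multichoose_lt c C
  have hle : (c + 1).multichoose (n + d) ≤ C * c.multichoose n := by
    exact_mod_cast (hlower (n + d)).trans (hC n)
  exact hn.not_ge ((monotone_multichoose_succ c (Nat.le_add_right n d)).trans hle)

end TensorProducts

section Quotients

open RingTheory.Sequence

variable {Q : Type u} [CommRing Q] [IsLocalRing Q] {f : List Q}

lemma mem_maximalIdeal_of_isRegular (hf : IsRegular Q f) {r : Q} (hr : r ∈ f) :
    r ∈ maximalIdeal Q :=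
  le_maximalIdeal (J := Ideal.ofList f) (fun h ↦ hf.top_ne_smul (by simp [h]))
    (Ideal.subset_span hr)

variable [IsLocalRing (Q ⧸ Ideal.ofList f)]

lemma exists_betti_add_le_of_hasProjectiveDimensionLT [IsNoetherianRing Q]
    (hf : IsWeaklyRegular Q f) (hmem : ∀ r ∈ f, r ∈ maximalIdeal Q) (m : ℕ) (X : Type u)
    [AddCommGroup X] [Module Q X] [Module (Q ⧸ Ideal.ofList f) X]
    [IsScalarTower Q (Q ⧸ Ideal.ofList f) X] [Module.Finite (Q ⧸ Ideal.ofList f) X]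
    (hX : HasProjectiveDimensionLT (ModuleCat.of Q X) (f.length + m + 1)) :
    ∃ C : ℕ, ∀ n, betti (ModuleCat.of (Q ⧸ Ideal.ofList f) X) (n + m) ≤
      (C * f.length.multichoose n : ℕ) := by
  induction m generalizing X with
  | zero =>
    exact (hasReducibleComplexity_of_hasProjectiveDimensionLT hf hmem _
      Ideal.Quotient.mk_surjective Ideal.mk_ker X hX).exists_betti_le
  | succ m ih =>
    obtain ⟨r, π, hπ⟩ := Module.Finite.exists_fin' (Q ⧸ Ideal.ofList f) X
    have := hasProjectiveDimensionLT_quotient_ofList hf hmem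
    have := hasProjectiveDimensionLT_of_ge (ModuleCat.of Q (Q ⧸ Ideal.ofList f)) (f.length + 1)
      (f.length + m + 1) (by lia)
    obtain ⟨C, hC⟩ := ih (LinearMap.ker π) (hasProjectiveDimensionLT_ker hπ hX)
    have : Projective π.shortComplexKer.X₂ :=
      (IsProjective.iff_projective (Fin r → Q ⧸ Ideal.ofList f)).1 inferInstance
    exact ⟨C, fun n ↦ (betti_X₃_succ_le_of_projective
      (LinearMap.shortExact_shortComplexKer hπ) (n + m)).trans (hC n)⟩

lemma IsRegularLocal.exists_betti_add_le (hQ : IsRegularLocal Q) (hf : IsRegular Q f)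
    (X : ModuleCat.{u} (Q ⧸ Ideal.ofList f)) [Module.Finite (Q ⧸ Ideal.ofList f) X] :
    ∃ C d : ℕ, ∀ n, betti X (n + d) ≤ (C * f.length.multichoose n : ℕ) := by
  have := hQ.1
  obtain ⟨d, -, hd⟩ := hQ.exists_hasProjectiveDimensionLT
  let _ : Module Q X := Module.compHom X (algebraMap Q (Q ⧸ Ideal.ofList f))
  have : IsScalarTower Q (Q ⧸ Ideal.ofList f) X := .of_algebraMap_smul fun _ _ ↦ rfl
  have : Module.Finite Q X := .trans (Q ⧸ Ideal.ofList f) X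
  have := hd (ModuleCat.of Q X)
  obtain ⟨C, hC⟩ := exists_betti_add_le_of_hasProjectiveDimensionLT hf.1
    (fun _ ↦ mem_maximalIdeal_of_isRegular hf) d X
    (hasProjectiveDimensionLT_of_ge _ (d + 1) (f.length + d + 1) (by lia))
  exact ⟨C, d, hC⟩

lemma IsRegularLocal.hasReducibleComplexity_of_moduleDepth_eq_ringKrullDim
    (hQ : IsRegularLocal Q) (hf : IsRegular Q f) (X : ModuleCat.{u} (Q ⧸ Ideal.ofList f))
    [Nontrivial X] [Module.Finite (Q ⧸ Ideal.ofList f) X]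
    (hX : (moduleDepth (Q ⧸ Ideal.ofList f) X : WithBot ℕ∞) =
      ringKrullDim (Q ⧸ Ideal.ofList f)) :
    HasReducibleComplexity f.length X := by
  have := hQ.1
  let _ : Module Q X := Module.compHom X (algebraMap Q (Q ⧸ Ideal.ofList f))
  have : IsScalarTower Q (Q ⧸ Ideal.ofList f) X := .of_algebraMap_smul fun _ _ ↦ rfl
  exact hasReducibleComplexity_of_hasProjectiveDimensionLT hf.1
    (fun _ ↦ mem_maximalIdeal_of_isRegular hf) _ Ideal.Quotient.mk_surjective Ideal.mk_ker X
    (hasProjectiveDimensionLT_of_moduleDepth_eq_ringKrullDim hQ hf X hX)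

end Quotients

theorem stmt_4 (Q : Type u) [CommRing Q] [IsLocalRing Q] (hQ : IsRegularLocal Q)
    (f : List Q) (hf : RingTheory.Sequence.IsRegular Q f)
    [IsLocalRing (Q ⧸ Ideal.ofList f)]
    (M : ℕ → ModuleCat.{u} (Q ⧸ Ideal.ofList f))
    (hfin : ∀ i ≤ f.length, Module.Finite (Q ⧸ Ideal.ofList f) (M i))
    (hnonfree : ∀ i ≤ f.length, ¬ Module.Free (Q ⧸ Ideal.ofList f) (M i))
    (hMCM : ∀ i ≤ f.length, (moduleDepth (Q ⧸ Ideal.ofList f) (M i) : WithBot ℕ∞) =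
      ringKrullDim (Q ⧸ Ideal.ofList f)) :
    ∃ i : ℕ, 1 ≤ i ∧ i ≤ f.length ∧
      {n : ℕ | ¬ IsZero (((Tor (ModuleCat.{u} (Q ⧸ Ideal.ofList f)) n).obj
        (tensorUpTo (Q ⧸ Ideal.ofList f) M (i - 1))).obj (M i))}.Infinite := by
  have := hQ.1
  have := finite_tensorUpTo M f.length hfin
  obtain ⟨C, d, hC⟩ :=
    hQ.exists_betti_add_le hf (tensorUpTo (Q ⧸ Ideal.ofList f) M f.length)
  refine exists_infinite_tor_tensorUpTo (fun i hi ↦ ⟨f.length, ?_⟩) hnonfree hC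
  have := hfin i hi
  have : Nontrivial (M i) := by
    by_contra h
    rw [not_nontrivial_iff_subsingleton] at h
    exact hnonfree i hi inferInstance
  exact hQ.hasReducibleComplexity_of_moduleDepth_eq_ringKrullDim hf (M i) (hMCM i hi)
end

section
/- Let Q be a regular local ring, f₁,…,f_c a Q-regular sequence, and R = Q/(f₁,…,f_c) (a local complete intersection, hence a Gorenstein local ring). Let M and N be finitely generated R-modules with Ext^i_R(M,N) = 0 for all i > 0. Then the natural homomorphism Hom_R(M,R) ⊗_R N → Hom_R(M,N), sending φ ⊗ n to the map m ↦ φ(m)·n, is an isomorphism. -/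
/-!
STATEMENT 5: Over a local complete intersection `R = Q ⧸ (f₁, …, f_c)`, if `M`, `N` are
finitely generated `R`-modules with `Ext^i_R(M, N) = 0` for all `i > 0`, then the natural map
`Hom_R(M, R) ⊗_R N → Hom_R(M, N)`, `φ ⊗ n ↦ (m ↦ φ(m) • n)` (Mathlib's `dualTensorHom`),
is an isomorphism.
-/

open CategoryTheory CategoryTheory.Limits

universe u

/-!
Let `C = Hom_R(F, R)` be the dual of a resolution `F` of `M` by finite free modules, with
differentials `δ j`, and let `D` be the character module of `N`. Since `C ⊗ N ≅ Hom_R(F, N)`, the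
vanishing of `Ext^i_R(M, N)` for `i > 0` makes `C ⊗ N`, hence `Hom_R(C, D)`, exact in positive
degrees. It suffices that `Hom_R(-, D)` stays exact on `0 → M* → C 0 → C 1`, since then
`0 → M* ⊗ N → C 0 ⊗ N → C 1 ⊗ N` is exact and can be compared with
`0 → Hom(M, N) → Hom(F 0, N) → Hom(F 1, N)`. This amounts to `Ext^1(range (δ j), D) = 0` for
`j = 0, 1`.

As `R` has finite injective dimension over itself, `C` is exact in high degrees. Renumber so that
`C` is exact in positive degrees. The images of the `δ j` are then iterated cosyzygies with
projective middle terms, and exactness of `Hom_R(C, D)` kills `Ext^i(range (δ j), D)` for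
`0 < i < j`. Over a complete intersection this forces `Ext^i(range (δ j), D) = 0` for all `i > 0`
and all `j`. The homology `H` of `C` in the next lower degree therefore satisfies
`(H ⊗ N)^∨ = Hom_R(H, D) = 0`, so `H = 0` by Nakayama's lemma, and one descends.

This rigidity of a sequence of cosyzygies `X j` is trivial over `Q`, which has finite global
dimension, and passes from `A` to `B = A ⧸ (f)` for a nonzerodivisor `f`. Vanishing in the range
`0 < i ≤ j` over `B` gives such a range over `A`, hence `Ext_A^i(X j, D) = 0` for all `i ≥ 2`. In
these degrees the change of rings sequence for `B` propagates vanishing of `Ext_B(X j, D)` from `i`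
to `i + 2`, and by dimension shifting `Ext_B^i(X j, D)` vanishes once `Ext_B^{i + l}(X (j + l), D)`
does for some large `l`. Finiteness of the self-injective dimension passes from `A` to `B` by Rees'
theorem.
-/

/-- `f` and `g` form a short exact sequence `0 → A → B → C → 0` of modules. -/
structure IsShortExact {R A B C : Type*} [Semiring R] [AddCommMonoid A] [Module R A]
    [AddCommMonoid B] [Module R B] [AddCommMonoid C] [Module R C] (f : A →ₗ[R] B) (g : B →ₗ[R] C) :
    Prop where
  injective : Function.Injective f
  exact : Function.Exact f g
  surjective : Function.Surjective g

/-- `Ext^i_R(X, Y) = 0`. The modules live in the universe of `R` so that `ModuleCat R` has enough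
projectives. -/
def ExtVanish (R : Type u) [CommRing R] (X Y : Type u) [AddCommGroup X] [Module R X]
    [AddCommGroup Y] [Module R Y] (i : ℕ) : Prop :=
  Subsingleton (Abelian.Ext.{u} (ModuleCat.of R X) (ModuleCat.of R Y) i)

lemma exact_rangeRestrict {R A B C : Type*} [CommRing R] [AddCommGroup A] [Module R A]
    [AddCommGroup B] [Module R B] [AddCommGroup C] [Module R C] {f : A →ₗ[R] B} {g : B →ₗ[R] C}
    (hfg : Function.Exact f g) : Function.Exact f g.rangeRestrict :=
  fun b => by rw [← hfg b]; exact Subtype.ext_iff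

namespace IsShortExact

section LinearAlgebra

variable {R A B C : Type*} [CommRing R] [AddCommGroup A] [Module R A] [AddCommGroup B] [Module R B]
  [AddCommGroup C] [Module R C] {f : A →ₗ[R] B} {g : B →ₗ[R] C}

lemma subtype_ker (hg : Function.Surjective g) : IsShortExact (LinearMap.ker g).subtype g :=
  ⟨Submodule.injective_subtype _, LinearMap.exact_subtype_ker_map g, hg⟩

lemma rangeRestrict (hf : Function.Injective f) (hfg : Function.Exact f g) :
    IsShortExact f g.rangeRestrict :=
  ⟨hf, exact_rangeRestrict hfg, g.surjective_rangeRestrict⟩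

lemma subtype_range (hfg : Function.Exact f g) (hg : Function.Surjective g) :
    IsShortExact (LinearMap.range f).subtype g :=
  ⟨Submodule.injective_subtype _, fun b => by rw [hfg b]; simp, hg⟩

lemma subtype_range_rangeRestrict (hfg : Function.Exact f g) :
    IsShortExact (LinearMap.range f).subtype g.rangeRestrict :=
  ⟨Submodule.injective_subtype _, hfg.linearMap_rangeRestrict, g.surjective_rangeRestrict⟩

lemma restrictScalars (S : Type*) [CommRing S] [Module S A] [Module S B] [Module S C] [SMul S R]
    [IsScalarTower S R A] [IsScalarTower S R B] [IsScalarTower S R C] (h : IsShortExact f g) :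
    IsShortExact (f.restrictScalars S) (g.restrictScalars S) :=
  ⟨h.injective, h.exact, h.surjective⟩

lemma mapRange (h : IsShortExact f g) (ι : Type*) :
    IsShortExact (Finsupp.mapRange.linearMap (α := ι) f) (Finsupp.mapRange.linearMap g) where
  injective := Finsupp.mapRange_injective f f.map_zero h.injective
  exact := by
    rw [LinearMap.exact_iff, Finsupp.ker_mapRange, h.exact.linearMap_ker_eq,
      Finsupp.range_mapRange_linearMap f (LinearMap.ker_eq_bot.2 h.injective)]
  surjective := Finsupp.mapRange_surjective g g.map_zero h.surjective

end LinearAlgebra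

variable {R : Type u} [CommRing R] {A B C Y : Type u} [AddCommGroup A] [Module R A]
  [AddCommGroup B] [Module R B] [AddCommGroup C] [Module R C] [AddCommGroup Y] [Module R Y]
  {f : A →ₗ[R] B} {g : B →ₗ[R] C} (h : IsShortExact f g)

include h

lemma shortExact :
    (ModuleCat.shortComplexOfCompEqZero f g h.exact.linearMap_comp_eq_zero).ShortExact :=
  ModuleCat.shortComplex_shortExact _ h.exact h.injective h.surjective

lemma extVanish_middle {i : ℕ} (hA : ExtVanish R A Y i) (hC : ExtVanish R C Y i) :
    ExtVanish R B Y i := by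
  refine subsingleton_of_forall_eq 0 fun x => ?_
  obtain ⟨y, rfl⟩ := Abelian.Ext.contravariant_sequence_exact₂ h.shortExact _ x
    (@Subsingleton.elim _ hA _ _)
  rw [@Subsingleton.elim _ hC y 0, Abelian.Ext.comp_zero]

lemma extVanish_left {i : ℕ} (hB : ExtVanish R B Y i) (hC : ExtVanish R C Y (i + 1)) :
    ExtVanish R A Y i := by
  refine subsingleton_of_forall_eq 0 fun x => ?_
  obtain ⟨y, rfl⟩ := Abelian.Ext.contravariant_sequence_exact₁ h.shortExact _ x (add_comm 1 i)
    (@Subsingleton.elim _ hC _ _)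
  rw [@Subsingleton.elim _ hB y 0, Abelian.Ext.comp_zero]

lemma extVanish_right {i : ℕ} (hA : ExtVanish R A Y i) (hB : ExtVanish R B Y (i + 1)) :
    ExtVanish R C Y (i + 1) := by
  refine subsingleton_of_forall_eq 0 fun x => ?_
  obtain ⟨y, rfl⟩ := Abelian.Ext.contravariant_sequence_exact₃ h.shortExact _ x
    (@Subsingleton.elim _ hB _ _) (add_comm 1 i)
  rw [@Subsingleton.elim _ hA y 0, Abelian.Ext.comp_zero]

lemma lcomp_surjective (hC : ExtVanish R C Y 1) : Function.Surjective (f.lcomp R Y) := by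
  intro φ
  obtain ⟨y, hy⟩ := Abelian.Ext.contravariant_sequence_exact₁ h.shortExact _
    (Abelian.Ext.mk₀ (ModuleCat.ofHom φ)) (add_zero 1) (@Subsingleton.elim _ hC _ _)
  obtain ⟨ψ, rfl⟩ := (Abelian.Ext.mk₀_bijective _ _).2 y
  rw [Abelian.Ext.mk₀_comp_mk₀] at hy
  exact ⟨ψ.hom, congrArg ModuleCat.Hom.hom ((Abelian.Ext.mk₀_bijective _ _).1 hy)⟩

lemma extVanish_one_of_lcomp_surjective (hB : ExtVanish R B Y 1)
    (hf : Function.Surjective (f.lcomp R Y)) : ExtVanish R C Y 1 := by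
  refine subsingleton_of_forall_eq 0 fun x => ?_
  obtain ⟨y, rfl⟩ := Abelian.Ext.contravariant_sequence_exact₃ h.shortExact _ x
    (@Subsingleton.elim _ hB _ _) (add_zero 1)
  obtain ⟨φ, rfl⟩ := (Abelian.Ext.mk₀_bijective _ _).2 y
  obtain ⟨ψ, hψ⟩ := hf φ.hom
  have hφ : φ = ModuleCat.ofHom f ≫ ModuleCat.ofHom ψ := ModuleCat.hom_ext hψ.symm
  rw [hφ, ← Abelian.Ext.mk₀_comp_mk₀]
  exact h.shortExact.extClass_comp_assoc _

section Projective

variable [Module.Projective R B]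

lemma extVanish_one_iff : ExtVanish R C Y 1 ↔ Function.Surjective (f.lcomp R Y) :=
  ⟨h.lcomp_surjective,
    h.extVanish_one_of_lcomp_surjective (Abelian.Ext.subsingleton_of_projective _ _ _)⟩

lemma extVanish_succ_iff {i : ℕ} : ExtVanish R A Y (i + 1) ↔ ExtVanish R C Y (i + 2) :=
  ⟨fun hA => h.extVanish_right hA (Abelian.Ext.subsingleton_of_projective _ _ _),
    h.extVanish_left (Abelian.Ext.subsingleton_of_projective _ _ _)⟩

end Projective

end IsShortExact

lemma exists_isShortExact_finsupp (R X : Type u) [CommRing R] [AddCommGroup X]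
    [Module R X] : ∃ (S : Type u) (_ : AddCommGroup S) (_ : Module R S) (i : S →ₗ[R] X →₀ R)
      (p : (X →₀ R) →ₗ[R] X), IsShortExact i p :=
  ⟨_, _, _, _, _, .subtype_ker (Finsupp.linearCombination_id_surjective R X)⟩

/-- Vanishing of the derived functor `Ext` implies vanishing of `Ext` computed in the derived
category. -/
lemma extVanish_of_isZero_ext {R : Type u} [CommRing R] {X Y : Type u} [AddCommGroup X] [Module R X]
    [AddCommGroup Y] [Module R Y] (i : ℕ)
    (h : IsZero (((Ext R (ModuleCat.{u} R) (i + 1)).obj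
      (Opposite.op (ModuleCat.of R X))).obj (ModuleCat.of R Y))) : ExtVanish R X Y (i + 1) := by
  let P := projectiveResolution (ModuleCat.of R X)
  have h1 := h.of_iso (P.isoExt (i + 1) (ModuleCat.of R Y)).symm
  rw [← HomologicalComplex.exactAt_iff_isZero_homology,
    HomologicalComplex.exactAt_iff' _ i (i + 1) (i + 2) (by simp) (by simp),
    ShortComplex.moduleCat_exact_iff] at h1
  refine subsingleton_of_forall_eq 0 fun x => ?_
  obtain ⟨f, hf, rfl⟩ := P.extMk_surjective x (i + 2) rfl
  rw [P.extMk_eq_zero_iff f _ rfl hf i rfl]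
  exact h1 f hf

section InjectiveDimension

variable {R : Type u} [CommRing R]

lemma injective_of_forall_extVanish_quotient (Y : ModuleCat.{u} R)
    (h : ∀ I : Ideal R, ExtVanish R (R ⧸ I) Y 1) : Injective Y := by
  rw [← Module.injective_iff_injective_object R Y, ← Module.Baer.iff_injective]
  intro I φ
  have hI : IsShortExact I.subtype I.mkQ :=
    ⟨I.injective_subtype, LinearMap.exact_subtype_mkQ I, I.mkQ_surjective⟩
  obtain ⟨ψ, hψ⟩ := hI.lcomp_surjective (h I) φ
  exact ⟨ψ, fun x hx => LinearMap.congr_fun hψ ⟨x, hx⟩⟩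

lemma hasInjectiveDimensionLT_of_forall_extVanish_quotient (n : ℕ) (Y : ModuleCat.{u} R)
    (h : ∀ I : Ideal R, ExtVanish R (R ⧸ I) Y (n + 1)) : HasInjectiveDimensionLT Y (n + 1) := by
  induction n generalizing Y with
  | zero =>
    exact injective_iff_hasInjectiveDimensionLT_one.1 (injective_of_forall_extVanish_quotient Y h)
  | succ n ih =>
    let S := ShortComplex.mk (Injective.ι Y) _ (cokernel.condition _)
    have hS : S.ShortExact := { exact := ShortComplex.exact_cokernel _ }
    have hJ : Injective S.X₂ := inferInstanceAs (Injective (Injective.under Y))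
    refine (hS.hasInjectiveDimensionLT_X₃_iff n hJ).1 (ih _ fun I => ?_)
    refine subsingleton_of_forall_eq 0 fun x => ?_
    obtain ⟨y, rfl⟩ := Abelian.Ext.covariant_sequence_exact₃ _ hS x rfl
      (@Subsingleton.elim _ (h I) _ _)
    rw [Abelian.Ext.eq_zero_of_injective y, Abelian.Ext.zero_comp]

end InjectiveDimension

section BaseChange

open TensorProduct

lemma exists_injective_comp_eq {R A B C D : Type*} [CommRing R] [AddCommGroup A] [Module R A]
    [AddCommGroup B] [Module R B] [AddCommGroup C] [Module R C] [AddCommGroup D] [Module R D]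
    {f : A →ₗ[R] B} {g : B →ₗ[R] C} {h : B →ₗ[R] D} (hfg : Function.Exact f g)
    (hg : Function.Surjective g) (hfh : Function.Exact f h) :
    ∃ c : C →ₗ[R] D, Function.Injective c ∧ c ∘ₗ g = h := by
  obtain ⟨c, rfl⟩ := (LinearMap.exact_lcomp_of_exact_of_surjective D hfg hg h).1
    hfh.linearMap_comp_eq_zero
  refine ⟨c, (injective_iff_map_eq_zero c).2 fun x hx => ?_, rfl⟩
  obtain ⟨b, rfl⟩ := hg x
  exact (hfg b).2 ((hfh b).1 hx)

lemma IsShortExact.exists_comp_eq {R A B C D : Type*} [CommRing R] [AddCommGroup A] [Module R A]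
    [AddCommGroup B] [Module R B] [AddCommGroup C] [Module R C] [AddCommGroup D] [Module R D]
    {f : A →ₗ[R] B} {g : B →ₗ[R] C} (h : IsShortExact f g) {φ : D →ₗ[R] B} (hφ : g ∘ₗ φ = 0) :
    ∃ ψ : D →ₗ[R] A, f ∘ₗ ψ = φ := by
  have hmem (d : D) : φ d ∈ LinearMap.range f := (h.exact _).1 (LinearMap.congr_fun hφ d)
  refine ⟨(LinearEquiv.ofInjective f h.injective).symm ∘ₗ φ.codRestrict _ hmem, ?_⟩
  ext d
  exact congrArg Subtype.val
    ((LinearEquiv.ofInjective f h.injective).apply_symm_apply ⟨φ d, hmem d⟩)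

lemma lcomp_baseChange_surjective_iff {A B S G : Type*} [CommSemiring A] [CommSemiring B]
    [Algebra A B] [AddCommMonoid S] [Module A S] [AddCommMonoid G] [Module A G] (i : S →ₗ[A] G)
    (D : Type*) [AddCommMonoid D] [Module A D] [Module B D] [IsScalarTower A B D] :
    Function.Surjective ((i.baseChange B).lcomp B D) ↔ Function.Surjective (i.lcomp A D) := by
  have hcomm : (i.baseChange B).lcomp B D ∘ LinearMap.liftBaseChangeEquiv B =
      LinearMap.liftBaseChangeEquiv B ∘ i.lcomp A D := by
    funext φ
    ext s
    simp
  rw [← (LinearMap.liftBaseChangeEquiv B).surjective.of_comp_iff, hcomm,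
    EquivLike.comp_surjective]

/-- `B` is the quotient of `A` by the ideal generated by a nonzerodivisor `f`. -/
structure IsRegularQuotient (A B : Type*) [CommRing A] [CommRing B] [Algebra A B] (f : A) :
    Prop where
  regular : IsSMulRegular A f
  surjective : Function.Surjective (algebraMap A B)
  ker : RingHom.ker (algebraMap A B) = Ideal.span {f}

namespace IsRegularQuotient

section LinearAlgebra

variable {A B : Type*} [CommRing A] [CommRing B] [Algebra A B] {f : A}
  (h : IsRegularQuotient A B f)

include h

lemma isShortExact : IsShortExact (LinearMap.lsmul A A f) (Algebra.linearMap A B) where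
  injective := h.regular
  exact a := by
    change a ∈ RingHom.ker (algebraMap A B) ↔ _
    rw [h.ker, Ideal.mem_span_singleton']
    simp [mul_comm f]
  surjective := h.surjective

lemma smul_eq_zero {T : Type*} [AddCommGroup T] [Module A T] [Module B T] [IsScalarTower A B T]
    (x : T) : f • x = 0 := by
  have hf : algebraMap A B f = 0 := by
    rw [← RingHom.mem_ker, h.ker]
    exact Ideal.mem_span_singleton_self f
  rw [← algebraMap_smul B, hf, zero_smul]

variable {S F X : Type*} [AddCommGroup S] [Module A S] [AddCommGroup F] [Module A F]
  [AddCommGroup X] [Module A X]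

lemma exists_one_tmul_eq (t : B ⊗[A] S) : ∃ s : S, (1 : B) ⊗ₜ[A] s = t :=
  TensorProduct.mk_surjective A S B h.surjective t

lemma one_tmul_eq_zero_iff (s : S) : (1 : B) ⊗ₜ[A] s = 0 ↔ ∃ s' : S, f • s' = s := by
  have hladder := Function.Exact.iff_of_ladder_linearEquiv
    (f₁₂ := (LinearMap.lsmul A A f).rTensor S) (f₂₃ := (Algebra.linearMap A B).rTensor S)
    (g₁₂ := LinearMap.lsmul A S f) (g₂₃ := TensorProduct.mk A B S 1)
    (e₁ := TensorProduct.lid A S) (e₂ := TensorProduct.lid A S) (e₃ := LinearEquiv.refl A _)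
    (by ext; simp) (by ext; simp)
  exact hladder.2 (rTensor_exact S h.isShortExact.exact h.isShortExact.surjective) s

variable {i : S →ₗ[A] F} {p : F →ₗ[A] X}

lemma isShortExact_baseChange (hs : IsShortExact i p) (hX : IsSMulRegular X f) :
    IsShortExact (i.baseChange B) (p.baseChange B) where
  injective := by
    rw [injective_iff_map_eq_zero]
    intro t ht
    obtain ⟨s, rfl⟩ := h.exists_one_tmul_eq t
    rw [LinearMap.baseChange_tmul, h.one_tmul_eq_zero_iff] at ht
    obtain ⟨a, ha⟩ := ht
    have hpa : p a = 0 := hX.right_eq_zero_of_smul <| by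
      rw [← map_smul, ha, hs.exact.apply_apply_eq_zero]
    obtain ⟨s', rfl⟩ := (hs.exact a).1 hpa
    exact (h.one_tmul_eq_zero_iff s).2 ⟨s', hs.injective (by rw [map_smul, ha])⟩
  exact := lTensor_exact B hs.exact hs.surjective
  surjective := LinearMap.lTensor_surjective B hs.surjective

-- This is Eisenbud's observation that a matrix factorization of `f` becomes exact modulo `f`.
lemma exact_baseChange_of_comp_eq_smul {σ : F →ₗ[A] S} (hi : Function.Injective i)
    (hσ : i ∘ₗ σ = f • LinearMap.id) : Function.Exact (σ.baseChange B) (i.baseChange B) := by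
  intro t
  obtain ⟨s, rfl⟩ := h.exists_one_tmul_eq t
  rw [LinearMap.baseChange_tmul, h.one_tmul_eq_zero_iff]
  constructor
  · rintro ⟨a, ha⟩
    have hs : σ a = s := hi ((LinearMap.congr_fun hσ a).trans ha)
    exact ⟨1 ⊗ₜ a, by rw [LinearMap.baseChange_tmul, hs]⟩
  · rintro ⟨u, hu⟩
    obtain ⟨a, rfl⟩ := h.exists_one_tmul_eq u
    rw [← h.one_tmul_eq_zero_iff, ← LinearMap.baseChange_tmul, ← hu, LinearMap.baseChange_tmul,
      LinearMap.baseChange_tmul, h.one_tmul_eq_zero_iff]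
    exact ⟨a, (LinearMap.congr_fun hσ a).symm⟩

variable [Module B X] [IsScalarTower A B X]

lemma exists_comp_eq_smul (hs : IsShortExact i p) :
    ∃ σ : F →ₗ[A] S, i ∘ₗ σ = f • LinearMap.id ∧ σ ∘ₗ i = f • LinearMap.id := by
  obtain ⟨σ, hσ⟩ := hs.exists_comp_eq (φ := f • LinearMap.id)
    (by ext a; simp [h.smul_eq_zero (p a)])
  refine ⟨σ, hσ, LinearMap.ext fun s => hs.injective ?_⟩
  simpa using LinearMap.congr_fun hσ (i s)

lemma exact_liftBaseChange (hip : Function.Exact i p) :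
    Function.Exact (i.baseChange B) (LinearMap.liftBaseChange B p) := by
  intro t
  constructor
  · obtain ⟨a, rfl⟩ := h.exists_one_tmul_eq t
    intro ha
    obtain ⟨s, rfl⟩ := (hip a).1 (by simpa using ha)
    exact ⟨1 ⊗ₜ s, LinearMap.baseChange_tmul ..⟩
  · rintro ⟨u, rfl⟩
    obtain ⟨s, rfl⟩ := h.exists_one_tmul_eq u
    simp [hip.apply_apply_eq_zero]

end LinearAlgebra

variable {A B : Type u} [CommRing A] [CommRing B] [Algebra A B] {f : A}
  (h : IsRegularQuotient A B f)

include h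

/-- A presentation `0 → S → F → X → 0` over `A` of a `B`-module `X` gives rise to an exact sequence
`0 → X → B ⊗ S → B ⊗ F → X → 0`, here broken into two short ones. -/
lemma exists_isShortExact_baseChange {S F X : Type u} [AddCommGroup S] [Module A S] [AddCommGroup F]
    [Module A F] [AddCommGroup X] [Module A X] [Module B X] [IsScalarTower A B X] {i : S →ₗ[A] F}
    {p : F →ₗ[A] X} (hs : IsShortExact i p) (hF : IsSMulRegular F f) :
    ∃ (V : Type u) (_ : AddCommGroup V) (_ : Module B V) (c : X →ₗ[B] B ⊗[A] S)
      (d : B ⊗[A] S →ₗ[B] V) (e : V →ₗ[B] B ⊗[A] F), IsShortExact c d ∧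
        IsShortExact e (LinearMap.liftBaseChange B p) ∧ e ∘ₗ d = i.baseChange B := by
  obtain ⟨σ, hiσ, hσi⟩ := h.exists_comp_eq_smul hs
  have hσ : Function.Injective σ := by
    refine .of_comp (f := i) ?_
    rw [← LinearMap.coe_comp, hiσ]
    exact hF
  have hq : Function.Surjective (LinearMap.liftBaseChange B p) := fun x =>
    (hs.surjective x).imp' (fun a => (1 : B) ⊗ₜ a) (by simp)
  have hiq := h.exact_liftBaseChange hs.exact
  obtain ⟨c, hc, hcq⟩ :=
    exists_injective_comp_eq hiq hq (h.exact_baseChange_of_comp_eq_smul hσ hσi)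
  have hci : Function.Exact c (i.baseChange B) := fun t => by
    rw [h.exact_baseChange_of_comp_eq_smul hs.injective hiσ t, ← hcq, LinearMap.coe_comp,
      hq.range_comp]
  exact ⟨_, _, _, c, _, _, .rangeRestrict hc hci, .subtype_range hiq hq, rfl⟩

lemma extVanish_baseChange_iff (D : Type u) [AddCommGroup D] [Module A D] [Module B D]
    [IsScalarTower A B D] (n : ℕ) (S : Type u) [AddCommGroup S] [Module A S]
    (hS : IsSMulRegular S f) :
    ExtVanish B (B ⊗[A] S) D (n + 1) ↔ ExtVanish A S D (n + 1) := by
  induction n generalizing S with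
  | zero =>
    obtain ⟨K, _, _, i, p, hs⟩ := exists_isShortExact_finsupp A S
    rw [zero_add, hs.extVanish_one_iff, (h.isShortExact_baseChange hs hS).extVanish_one_iff,
      lcomp_baseChange_surjective_iff]
  | succ n ih =>
    obtain ⟨K, _, _, i, p, hs⟩ := exists_isShortExact_finsupp A S
    rw [← hs.extVanish_succ_iff, ← (h.isShortExact_baseChange hs hS).extVanish_succ_iff]
    exact ih K ((IsSMulRegular.finsupp h.regular).of_injective i hs.injective)

section Relations

variable {X D : Type u} [AddCommGroup X] [Module A X] [Module B X] [IsScalarTower A B X]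
  [AddCommGroup D] [Module A D] [Module B D] [IsScalarTower A B D] {k : ℕ}

lemma extVanish_restrictScalars (h₁ : ExtVanish B X D (k + 1)) (h₂ : ExtVanish B X D (k + 2)) :
    ExtVanish A X D (k + 2) := by
  obtain ⟨S, _, _, i, p, hs⟩ := exists_isShortExact_finsupp A X
  have hF : IsSMulRegular (X →₀ A) f := .finsupp h.regular
  obtain ⟨V, _, _, c, d, e, hcd, heq, -⟩ := h.exists_isShortExact_baseChange hs hF
  rw [← hs.extVanish_succ_iff, ← h.extVanish_baseChange_iff D k S (hF.of_injective i hs.injective)]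
  exact hcd.extVanish_middle h₁ (heq.extVanish_succ_iff.2 h₂)

lemma extVanish_add_two (hA : ExtVanish A X D (k + 3)) (hB : ExtVanish B X D (k + 1)) :
    ExtVanish B X D (k + 3) := by
  obtain ⟨S, _, _, i, p, hs⟩ := exists_isShortExact_finsupp A X
  have hF : IsSMulRegular (X →₀ A) f := .finsupp h.regular
  obtain ⟨V, _, _, c, d, e, hcd, heq, -⟩ := h.exists_isShortExact_baseChange hs hF
  rw [← hs.extVanish_succ_iff,
    ← h.extVanish_baseChange_iff D (k + 1) S (hF.of_injective i hs.injective)] at hA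
  exact heq.extVanish_succ_iff.1 (hcd.extVanish_right hB hA)

end Relations

end IsRegularQuotient

end BaseChange

/-- Every `A`-module has projective dimension less than a uniform bound. -/
def HasFiniteGlobalDimension (A : Type u) [CommRing A] : Prop :=
  ∃ d : ℕ, ∀ X : ModuleCat.{u} A, HasProjectiveDimensionLT X d

/-- `A` has finite injective dimension as a module over itself; for Noetherian `A` this is the
Gorenstein property, with the dimension bounded. -/
def HasFiniteSelfInjectiveDimension (A : Type u) [CommRing A] : Prop :=
  ∃ d : ℕ, HasInjectiveDimensionLT (ModuleCat.of A A) d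

/-- Rigidity of `Ext` along iterated cosyzygies `0 → X j → F j → X (j + 1) → 0`: if
`Ext^i(F j, D) = 0` for all `i > m`, then vanishing of `Ext^i(X j, D)` in the range `m < i ≤ j`
implies vanishing for all `i > m`. This isolates the property that passes from a ring to its
quotient by a nonzerodivisor. -/
def IsCosyzygyRigid (A : Type u) [CommRing A] : Prop :=
  ∀ (m : ℕ) (D : Type u) [AddCommGroup D] [Module A D] (X F : ℕ → Type u)
    [∀ j, AddCommGroup (X j)] [∀ j, Module A (X j)] [∀ j, AddCommGroup (F j)]
    [∀ j, Module A (F j)] (a : ∀ j, X j →ₗ[A] F j) (b : ∀ j, F j →ₗ[A] X (j + 1)),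
    (∀ j, IsShortExact (a j) (b j)) → (∀ i j, m < i → ExtVanish A (F j) D i) →
    (∀ i j, m < i → i ≤ j → ExtVanish A (X j) D i) → ∀ i j, m < i → ExtVanish A (X j) D i

lemma extVanish_of_extVanish_cosyzygy {A : Type u} [CommRing A] {m : ℕ} {D : Type u}
    [AddCommGroup D] [Module A D] {X F : ℕ → Type u} [∀ j, AddCommGroup (X j)]
    [∀ j, Module A (X j)] [∀ j, AddCommGroup (F j)] [∀ j, Module A (F j)]
    {a : ∀ j, X j →ₗ[A] F j} {b : ∀ j, F j →ₗ[A] X (j + 1)} (hab : ∀ j, IsShortExact (a j) (b j))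
    (hF : ∀ i j, m < i → ExtVanish A (F j) D i) {i j : ℕ} (hi : m < i) (l : ℕ)
    (h : ExtVanish A (X (j + l)) D (i + l)) : ExtVanish A (X j) D i := by
  induction l with
  | zero => exact h
  | succ l ih => exact ih ((hab (j + l)).extVanish_left (hF _ _ (by lia)) h)

namespace HasFiniteGlobalDimension

variable {A : Type u} [CommRing A]

lemma isCosyzygyRigid (h : HasFiniteGlobalDimension A) : IsCosyzygyRigid A := by
  obtain ⟨d, hd⟩ := h
  intro m D _ _ X F _ _ _ _ a b hab hF _ i j hi
  exact extVanish_of_extVanish_cosyzygy hab hF hi d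
    (HasProjectiveDimensionLT.subsingleton _ d _ (by lia) _)

lemma hasFiniteSelfInjectiveDimension (h : HasFiniteGlobalDimension A) :
    HasFiniteSelfInjectiveDimension A :=
  h.imp fun d hd => hasInjectiveDimensionLT_of_enoughProjectives _ d fun X =>
    (hd X).subsingleton X d d le_rfl _

end HasFiniteGlobalDimension

namespace IsRegularQuotient

open TensorProduct

variable {A B : Type u} [CommRing A] [CommRing B] [Algebra A B] {f : A}
  (h : IsRegularQuotient A B f)

include h

theorem isCosyzygyRigid (hA : IsCosyzygyRigid A) : IsCosyzygyRigid B := by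
  intro m D _ _ X F _ _ _ _ a b hab hF hX i j hi
  let : Module A D := Module.compHom D (algebraMap A B)
  let (j : ℕ) : Module A (X j) := Module.compHom (X j) (algebraMap A B)
  let (j : ℕ) : Module A (F j) := Module.compHom (F j) (algebraMap A B)
  have : IsScalarTower A B D := .of_compHom A B D
  have (j : ℕ) : IsScalarTower A B (X j) := .of_compHom A B (X j)
  have (j : ℕ) : IsScalarTower A B (F j) := .of_compHom A B (F j)
  have vanish_over_A : ∀ i j, m + 1 < i → ExtVanish A (X j) D i := by
    refine hA (m + 1) D X F _ _ (fun j => (hab j).restrictScalars A) (fun i j hi => ?_)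
      (fun i j hi hij => ?_)
    all_goals obtain ⟨k, rfl⟩ : ∃ k, i = k + 2 := ⟨i - 2, by lia⟩
    · exact h.extVanish_restrictScalars (hF _ _ (by lia)) (hF _ _ (by lia))
    · exact h.extVanish_restrictScalars (hX _ _ (by lia) (by lia)) (hX _ _ (by lia) hij)
  have vanish_periodically (t : ℕ) : ExtVanish B (X (j + 2 * i)) D (i + 2 * t) := by
    induction t with
    | zero => exact hX _ _ hi (by lia)
    | succ t ih =>
      obtain ⟨k, hk⟩ : ∃ k, i + 2 * t = k + 1 := ⟨i + 2 * t - 1, by lia⟩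
      rw [mul_add, ← add_assoc, hk]
      exact h.extVanish_add_two (vanish_over_A _ _ (by lia)) (hk ▸ ih)
  exact extVanish_of_extVanish_cosyzygy hab hF hi (2 * i) (vanish_periodically i)

lemma exists_lift_of_extVanish_one {S : Type u} [AddCommGroup S] [Module A S]
    (hS : ExtVanish A S A 1) (φ : S →ₗ[A] B) : ∃ ψ : S →ₗ[A] A, Algebra.linearMap A B ∘ₗ ψ = φ := by
  obtain ⟨y, hy⟩ := Abelian.Ext.covariant_sequence_exact₃ _ h.isShortExact.shortExact
    (Abelian.Ext.mk₀ (ModuleCat.ofHom φ)) (zero_add 1) (@Subsingleton.elim _ hS _ _)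
  obtain ⟨ψ, rfl⟩ := (Abelian.Ext.mk₀_bijective _ _).2 y
  rw [Abelian.Ext.mk₀_comp_mk₀] at hy
  exact ⟨ψ.hom, congrArg ModuleCat.Hom.hom ((Abelian.Ext.mk₀_bijective _ _).1 hy)⟩

lemma exists_linearMap_comp_eq {S F : Type*} [AddCommGroup S] [Module A S] [AddCommGroup F]
    [Module A F] {i : S →ₗ[A] F} {σ : F →ₗ[A] S} (hσi : σ ∘ₗ i = f • LinearMap.id) (ψ : S →ₗ[A] A)
    (hψ : Algebra.linearMap A B ∘ₗ ψ ∘ₗ σ = 0) : ∃ θ : F →ₗ[A] A, θ ∘ₗ i = ψ := by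
  obtain ⟨θ, hθ⟩ := h.isShortExact.exists_comp_eq hψ
  refine ⟨θ, LinearMap.ext fun s => h.regular ?_⟩
  calc
    f • θ (i s) = ψ (σ (i s)) := LinearMap.congr_fun hθ (i s)
    _ = f • ψ s := by rw [← map_smul]; exact congrArg ψ (LinearMap.congr_fun hσi s)

lemma extVanish_finsupp (D : Type u) [AddCommGroup D] [Module A D] (i : ℕ) (ι : Type u) :
    ExtVanish A (ι →₀ B) D (i + 2) :=
  (h.isShortExact.mapRange ι).extVanish_right (Abelian.Ext.subsingleton_of_projective _ _ _)
    (Abelian.Ext.subsingleton_of_projective _ _ _)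

variable {X : Type u} [AddCommGroup X] [Module A X] [Module B X] [IsScalarTower A B X]

lemma extVanish_one_self (hX : ExtVanish A X A 2) : ExtVanish B X B 1 := by
  obtain ⟨S, _, _, i, p, hs⟩ := exists_isShortExact_finsupp A X
  obtain ⟨V, _, _, c, d, e, hcd, heq, hed⟩ :=
    h.exists_isShortExact_baseChange hs (.finsupp h.regular)
  obtain ⟨σ, hiσ, hσi⟩ := h.exists_comp_eq_smul hs
  refine heq.extVanish_one_iff.2 fun φ => ?_
  obtain ⟨ψ, hψ⟩ := h.exists_lift_of_extVanish_one (hs.extVanish_succ_iff.2 hX)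
    (((φ ∘ₗ d).restrictScalars A) ∘ₗ TensorProduct.mk A B S 1)
  have hdσ (a : X →₀ A) : d (1 ⊗ₜ σ a) = 0 := heq.injective <| by
    have hia : i (σ a) = f • a := LinearMap.congr_fun hiσ a
    rw [map_zero, ← LinearMap.comp_apply, hed, LinearMap.baseChange_tmul, hia,
      h.one_tmul_eq_zero_iff]
    exact ⟨a, rfl⟩
  obtain ⟨θ, rfl⟩ := h.exists_linearMap_comp_eq hσi ψ <| by
    rw [← LinearMap.comp_assoc, hψ]
    exact LinearMap.ext fun a => (congrArg φ (hdσ a)).trans φ.map_zero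
  refine ⟨LinearMap.liftBaseChange B (Algebra.linearMap A B ∘ₗ θ), LinearMap.ext fun v => ?_⟩
  obtain ⟨t, rfl⟩ := hcd.surjective v
  obtain ⟨s, rfl⟩ := h.exists_one_tmul_eq t
  have hes : e (d (1 ⊗ₜ s)) = 1 ⊗ₜ i s :=
    (LinearMap.congr_fun hed _).trans (LinearMap.baseChange_tmul ..)
  simpa [hes] using LinearMap.congr_fun hψ s

/-- Rees' change of rings `Ext^{i+1}_B(X, B) ≃ Ext^{i+2}_A(X, A)`, at the level of vanishing. -/
lemma extVanish_self {i : ℕ} (hX : ExtVanish A X A (i + 2)) : ExtVanish B X B (i + 1) := by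
  induction i generalizing X with
  | zero => exact h.extVanish_one_self hX
  | succ i ih =>
    obtain ⟨K, _, _, j, p, hs⟩ := exists_isShortExact_finsupp B X
    let : Module A K := Module.compHom K (algebraMap A B)
    have : IsScalarTower A B K := .of_compHom A B K
    exact hs.extVanish_succ_iff.1
      (ih ((hs.restrictScalars A).extVanish_left (h.extVanish_finsupp A i X) hX))

theorem hasFiniteSelfInjectiveDimension (hA : HasFiniteSelfInjectiveDimension A) :
    HasFiniteSelfInjectiveDimension B := by
  obtain ⟨d, hd⟩ := hA
  refine ⟨d + 1, hasInjectiveDimensionLT_of_enoughProjectives _ _ fun X => ?_⟩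
  let : Module A X := Module.compHom X (algebraMap A B)
  have : IsScalarTower A B X := .of_compHom A B X
  exact h.extVanish_self (X := X) (hd.subsingleton _ d _ (by lia) (ModuleCat.of A X))

end IsRegularQuotient

lemma hasFiniteGlobalDimension_of_forall_quotient {A : Type u} [CommRing A] (n : ℕ)
    (h : ∀ I : Ideal A, HasProjectiveDimensionLT (ModuleCat.of A (A ⧸ I)) (n + 1)) :
    HasFiniteGlobalDimension A := by
  refine ⟨n + 1, fun X => .mk fun i hi Y e => ?_⟩
  have hY := hasInjectiveDimensionLT_of_forall_extVanish_quotient n Y fun I =>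
    (h I).subsingleton _ _ _ le_rfl Y
  exact @Subsingleton.elim _ (hY.subsingleton _ _ i hi X) e 0

namespace IsRegularQuotient

variable {A B : Type u} [CommRing A] [CommRing B] [Algebra A B] {f : A}
  (h : IsRegularQuotient A B f)

include h

lemma hasProjectiveDimensionLT_finsupp (ι : Type u) :
    HasProjectiveDimensionLT (ModuleCat.of A (ι →₀ B)) 2 := by
  have hproj : Projective (ModuleCat.of A (ι →₀ A)) := inferInstance
  have := projective_iff_hasProjectiveDimensionLT_one.1 hproj
  exact (h.isShortExact.mapRange ι).shortExact.hasProjectiveDimensionLT_X₃ 1 this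
    (hasProjectiveDimensionLT_of_ge (ModuleCat.of A (ι →₀ A)) 1 2 one_le_two)

lemma hasProjectiveDimensionLT_restrictScalars {n : ℕ} {Y : Type u} [AddCommGroup Y] [Module A Y]
    [Module B Y] [IsScalarTower A B Y]
    (hY : HasProjectiveDimensionLT (ModuleCat.of B Y) (n + 1)) :
    HasProjectiveDimensionLT (ModuleCat.of A Y) (n + 2) := by
  induction n generalizing Y with
  | zero =>
    have : Module.Projective B Y :=
      (IsProjective.iff_projective _).2 (projective_iff_hasProjectiveDimensionLT_one.2 hY)
    obtain ⟨s, hs⟩ := Module.projective_def'.1 this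
    let retract : Retract (ModuleCat.of A Y) (ModuleCat.of A (Y →₀ B)) :=
      { i := ModuleCat.ofHom (s.restrictScalars A)
        r := ModuleCat.ofHom ((Finsupp.linearCombination B id).restrictScalars A)
        retract := by ext y; exact LinearMap.congr_fun hs y }
    have := h.hasProjectiveDimensionLT_finsupp Y
    exact retract.hasProjectiveDimensionLT 2
  | succ n ih =>
    obtain ⟨K, _, _, i, p, hs⟩ := exists_isShortExact_finsupp B Y
    let : Module A K := Module.compHom K (algebraMap A B)
    have : IsScalarTower A B K := .of_compHom A B K
    have hproj : Projective (ModuleCat.of B (Y →₀ B)) := inferInstance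
    have := h.hasProjectiveDimensionLT_finsupp Y
    exact (hs.restrictScalars A).shortExact.hasProjectiveDimensionLT_X₃ (n + 2)
      (ih ((hs.shortExact.hasProjectiveDimensionLT_X₃_iff n hproj).1 hY))
      (hasProjectiveDimensionLT_of_ge (ModuleCat.of A (Y →₀ B)) 2 (n + 3) (by lia))

end IsRegularQuotient

lemma isRegularQuotient_span_singleton {A : Type*} [CommRing A] {x : A} (hx : IsSMulRegular A x) :
    IsRegularQuotient A (A ⧸ Ideal.span {x}) x :=
  ⟨hx, Ideal.Quotient.mk_surjective, Ideal.mk_ker⟩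

section RegularLocalRing

open IsLocalRing

section Noetherian

variable {A : Type u} [CommRing A] [IsLocalRing A] {x : A}

lemma exists_span_insert_erase_eq_maximalIdeal [DecidableEq A] {s : Finset A}
    (hs : Ideal.span (s : Set A) = maximalIdeal A) (hx : x ∈ maximalIdeal A)
    (hx2 : x ∉ maximalIdeal A ^ 2) :
    ∃ y ∈ s, Ideal.span (insert x (s.erase y) : Set A) = maximalIdeal A := by
  obtain ⟨a, ha⟩ := Submodule.mem_span_finset'.1 (hs ▸ hx)
  obtain ⟨y, hy⟩ : ∃ y : s, IsUnit (a y) := by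
    by_contra! hcon
    refine hx2 (ha ▸ pow_two (maximalIdeal A) ▸ Ideal.sum_mem _ fun y _ => ?_)
    exact Ideal.mul_mem_mul (hcon y) (hs ▸ Ideal.subset_span y.2)
  set J := Ideal.span (insert x (s.erase y) : Set A)
  have hne (z : A) (hz : z ∈ s.erase y) : z ∈ J := Ideal.subset_span (.inr hz)
  have hyJ : (y : A) ∈ J := by
    have hay : a y * y = x - ∑ z ∈ Finset.univ.erase y, a z * z := by
      rw [← ha, eq_sub_iff_add_eq]
      exact Finset.add_sum_erase _ (fun z : s => a z * (z : A)) (Finset.mem_univ y)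
    rw [← Ideal.unit_mul_mem_iff_mem _ hy, hay]
    refine sub_mem (Ideal.subset_span (.inl rfl)) (sum_mem fun z hz => J.mul_mem_left _ ?_)
    exact hne z (Finset.mem_erase.2 ⟨Subtype.coe_ne_coe.2 (Finset.ne_of_mem_erase hz), z.2⟩)
  refine ⟨y, y.2, le_antisymm (Ideal.span_le.2 ?_) (hs ▸ Ideal.span_le.2 fun z hz => ?_)⟩
  · refine Set.insert_subset hx fun z hz => hs ▸ Ideal.subset_span ?_
    exact Finset.mem_of_mem_erase hz
  · obtain rfl | hzy := eq_or_ne z y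
    exacts [hyJ, hne z (Finset.mem_erase.2 ⟨hzy, hz⟩)]

variable [IsNoetherianRing A]

lemma HasFiniteGlobalDimension.of_quotient_span_singleton (hx : x ∈ maximalIdeal A)
    (hreg : IsSMulRegular A x) (h : HasFiniteGlobalDimension (A ⧸ Ideal.span {x})) :
    HasFiniteGlobalDimension A := by
  obtain ⟨d, hd⟩ := h
  refine hasFiniteGlobalDimension_of_forall_quotient (d + 1) fun I => ?_
  have hI : IsShortExact I.subtype I.mkQ :=
    ⟨I.injective_subtype, LinearMap.exact_subtype_mkQ I, I.mkQ_surjective⟩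
  have hproj : Projective (ModuleCat.of A A) := inferInstance
  refine (hI.shortExact.hasProjectiveDimensionLT_X₃_iff d hproj).2 ?_
  have := hd (ModuleCat.of _ (QuotSMulTop x I))
  have hquot : HasProjectiveDimensionLT (ModuleCat.of A (QuotSMulTop x I)) (d + 2) :=
    (isRegularQuotient_span_singleton hreg).hasProjectiveDimensionLT_restrictScalars
      (hasProjectiveDimensionLT_of_ge (ModuleCat.of (A ⧸ Ideal.span {x}) (QuotSMulTop x I)) d
        (d + 1) d.le_succ)
  rw [← HasProjectiveDimensionLE, ← projectiveDimension_le_iff,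
    ModuleCat.projectiveDimension_quotSMulTop_eq_succ_of_isSMulRegular (ModuleCat.of A I) x
      (hreg.submodule I x) hx, Nat.cast_succ, ENat.WithBot.add_le_add_one_right_iff] at hquot
  exact (projectiveDimension_le_iff _ _).1 hquot

lemma spanFinrank_map_maximalIdeal_lt (hx : x ∈ maximalIdeal A) (hx2 : x ∉ maximalIdeal A ^ 2) :
    ((maximalIdeal A).map (Ideal.Quotient.mk (Ideal.span {x}))).spanFinrank <
      (maximalIdeal A).spanFinrank := by
  classical
  obtain ⟨s, hcard, hs⟩ :=
    Submodule.FG.exists_span_finset_card_eq_spanFinrank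
      (IsNoetherian.noetherian (maximalIdeal A))
  obtain ⟨y, hy, hspan⟩ := exists_span_insert_erase_eq_maximalIdeal hs hx hx2
  rw [← hcard]
  calc
    _ ≤ ((s.erase y).image (Ideal.Quotient.mk (Ideal.span {x}))).card := by
      rw [← hspan, Ideal.map_span, Set.image_insert_eq, Ideal.Quotient.eq_zero_iff_mem.2
        (Ideal.mem_span_singleton_self x), Ideal.span_insert_zero, ← Finset.coe_image]
      exact (Submodule.spanFinrank_span_le_ncard_of_finite (Finset.finite_toSet _)).trans_eq
        (Set.ncard_coe_finset _)
    _ ≤ (s.erase y).card := Finset.card_image_le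
    _ < s.card := Finset.card_erase_lt_of_mem hy

lemma isDomain_of_isPrime_span_singleton (hx : x ∈ maximalIdeal A)
    (hmin : ∀ p ∈ minimalPrimes A, x ∉ p) (hp : (Ideal.span {x}).IsPrime) : IsDomain A := by
  obtain ⟨p, hpmin, hple⟩ := Ideal.exists_minimalPrimes_le (bot_le : (⊥ : Ideal A) ≤ Ideal.span {x})
  have hpp : p.IsPrime := hpmin.1.1
  have hbot : p = ⊥ := by
    refine Submodule.eq_bot_of_le_smul_of_le_jacobson_bot (maximalIdeal A) p
      (IsNoetherian.noetherian p) (fun y hy => ?_) (jacobson_eq_maximalIdeal ⊥ bot_ne_top).ge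
    obtain ⟨z, rfl⟩ := Ideal.mem_span_singleton'.1 (hple hy)
    rw [mul_comm]
    exact Submodule.smul_mem_smul hx ((hpp.mem_or_mem hy).resolve_right (hmin p hpmin))
  rw [hbot] at hpp
  exact IsDomain.of_bot_isPrime A

lemma exists_notMem_sq_forall_notMem_minimalPrimes (hdim : ringKrullDim A ≠ 0) :
    ∃ x ∈ maximalIdeal A, x ∉ maximalIdeal A ^ 2 ∧ ∀ p ∈ minimalPrimes A, x ∉ p := by
  by_contra! hcon
  have hfin : (minimalPrimes A).Finite := minimalPrimes.finite_of_isNoetherianRing A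
  have hcover : (maximalIdeal A : Set A) ⊆ ((maximalIdeal A ^ 2 : Ideal A) : Set A) ∪
      ((maximalIdeal A ^ 2 : Ideal A) : Set A) ∪ ⋃ p ∈ (hfin.toFinset : Set (Ideal A)), p := by
    intro x hx
    by_cases hx2 : x ∈ maximalIdeal A ^ 2
    · exact .inl (.inl hx2)
    · obtain ⟨p, hp, hxp⟩ := hcon x hx hx2
      exact .inr (Set.mem_biUnion (hfin.mem_toFinset.2 hp) hxp)
  have hsq : ¬ maximalIdeal A ≤ maximalIdeal A ^ 2 :=
    (maximalIdeal_sq_lt_of_ringKrullDim_ne_zero hdim).not_ge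
  obtain ⟨p, hp, hle⟩ := (((Ideal.subset_union_prime' (f := id) fun p hp =>
    (hfin.mem_toFinset.1 hp).1.1).1 hcover).resolve_left hsq).resolve_left hsq
  have hpmin : p ∈ minimalPrimes A := hfin.mem_toFinset.1 hp
  have hpp : p.IsPrime := hpmin.1.1
  obtain rfl : p = maximalIdeal A := le_antisymm (le_maximalIdeal hpp.ne_top) hle
  rw [← maximalIdeal_height_eq_ringKrullDim, Ideal.height_eq_zero_iff.2 hpmin] at hdim
  exact hdim rfl

end Noetherian

variable {A : Type u} [CommRing A] [IsRegularLocalRing A]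

lemma isRegularLocalRing_quotient_span_singleton {x : A} (hx : x ∈ maximalIdeal A)
    (hx2 : x ∉ maximalIdeal A ^ 2) : IsRegularLocalRing (A ⧸ Ideal.span {x}) := by
  have hle := (Ideal.span_singleton_le_iff_mem _).2 hx
  have : Nontrivial (A ⧸ Ideal.span {x}) :=
    Ideal.Quotient.nontrivial_iff.2 (hle.trans_lt (maximalIdeal.isMaximal A).ne_top.lt_top).ne
  have : IsLocalRing (A ⧸ Ideal.span {x}) :=
    .of_surjective' (Ideal.Quotient.mk _) Ideal.Quotient.mk_surjective
  refine .of_spanFinrank_maximalIdeal_le _ (ENat.WithBot.add_le_add_one_right_iff.1 ?_)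
  have hlt := spanFinrank_map_maximalIdeal_lt hx hx2
  rw [map_maximalIdeal_of_surjective _ Ideal.Quotient.mk_surjective] at hlt
  calc
    _ ≤ ((maximalIdeal A).spanFinrank : WithBot ℕ∞) := mod_cast hlt
    _ = ringKrullDim A := IsRegularLocalRing.spanFinrank_maximalIdeal
    _ ≤ ringKrullDim (A ⧸ Ideal.span {x}) + 1 := by
      have := ringKrullDim_le_ringKrullDim_quotient_add_card (R := A) {x}
        (by simpa [ringJacobson_eq_maximalIdeal] using hx)
      rwa [Finset.coe_singleton, Finset.card_singleton, Nat.cast_one] at this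

lemma isField_of_ringKrullDim_eq_zero (hdim : ringKrullDim A = 0) : IsField A := by
  rw [← IsRegularLocalRing.spanFinrank_maximalIdeal] at hdim
  refine isField_iff_maximalIdeal_eq.2 ((Submodule.spanFinrank_eq_zero_iff_eq_bot ?_).1 ?_)
  exacts [IsNoetherian.noetherian _, mod_cast hdim]

variable (A) in
theorem isDomain_of_isRegularLocalRing : IsDomain A := by
  induction hn : (maximalIdeal A).spanFinrank using Nat.strong_induction_on generalizing A with
  | h n ih =>
    by_cases hdim : ringKrullDim A = 0
    · exact (isField_of_ringKrullDim_eq_zero hdim).isDomain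
    obtain ⟨x, hx, hx2, hmin⟩ := exists_notMem_sq_forall_notMem_minimalPrimes hdim
    have := isRegularLocalRing_quotient_span_singleton hx hx2
    have hlt := spanFinrank_map_maximalIdeal_lt hx hx2
    rw [map_maximalIdeal_of_surjective _ Ideal.Quotient.mk_surjective, hn] at hlt
    exact isDomain_of_isPrime_span_singleton hx hmin
      ((Ideal.Quotient.isDomain_iff_prime _).1 (ih _ hlt _ rfl))

variable (A) in
theorem hasFiniteGlobalDimension_of_isRegularLocalRing : HasFiniteGlobalDimension A := by
  induction hn : (maximalIdeal A).spanFinrank using Nat.strong_induction_on generalizing A with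
  | h n ih =>
    by_cases hdim : ringKrullDim A = 0
    · let := (isField_of_ringKrullDim_eq_zero hdim).toField
      have (X : Type u) [AddCommGroup X] [Module A X] : Module.Projective A X := inferInstance
      exact ⟨1, fun X => projective_iff_hasProjectiveDimensionLT_one.1 inferInstance⟩
    obtain ⟨x, hx, hx2⟩ := SetLike.exists_of_lt (maximalIdeal_sq_lt_of_ringKrullDim_ne_zero hdim)
    have := isDomain_of_isRegularLocalRing A
    have := isRegularLocalRing_quotient_span_singleton hx hx2
    have hlt := spanFinrank_map_maximalIdeal_lt hx hx2
    rw [map_maximalIdeal_of_surjective _ Ideal.Quotient.mk_surjective, hn] at hlt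
    exact .of_quotient_span_singleton hx
      (IsSMulRegular.of_ne_zero fun h0 => hx2 (h0 ▸ zero_mem _)) (ih _ hlt _ rfl)

end RegularLocalRing

section CompleteIntersection

open RingTheory.Sequence

variable {Q : Type u} [CommRing Q] {l : List Q}

lemma isRegularQuotient_ofList_append_singleton {g : Q} (hl : IsWeaklyRegular Q (l ++ [g])) :
    letI : Algebra (Q ⧸ Ideal.ofList l) (Q ⧸ Ideal.ofList (l ++ [g])) :=
      (Ideal.Quotient.factor (Ideal.ofList_append l [g] ▸ le_sup_left)).toAlgebra
    IsRegularQuotient (Q ⧸ Ideal.ofList l) (Q ⧸ Ideal.ofList (l ++ [g]))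
      (Ideal.Quotient.mk _ g) := by
  have hle : Ideal.ofList l ≤ Ideal.ofList (l ++ [g]) := Ideal.ofList_append l [g] ▸ le_sup_left
  let : Algebra (Q ⧸ Ideal.ofList l) (Q ⧸ Ideal.ofList (l ++ [g])) :=
    (Ideal.Quotient.factor hle).toAlgebra
  refine ⟨?_, Ideal.Quotient.factor_surjective hle, ?_⟩
  · have hg := ((isWeaklyRegular_append_iff Q l [g]).1 hl).2
    rw [isWeaklyRegular_singleton_iff, isSMulRegular_quotient_iff_mem_of_smul_mem] at hg
    rw [isSMulRegular_iff_right_eq_zero_of_smul]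
    intro y hy
    obtain ⟨y, rfl⟩ := Ideal.Quotient.mk_surjective y
    rw [smul_eq_mul, ← map_mul, Ideal.Quotient.eq_zero_iff_mem] at hy
    rw [Ideal.Quotient.eq_zero_iff_mem]
    simpa using hg y (by simpa using hy)
  · change RingHom.ker (Ideal.Quotient.factor hle) = _
    rw [Ideal.Quotient.factor_ker, Ideal.ofList_append, Ideal.map_sup, Ideal.map_quotient_self,
      bot_sup_eq, Ideal.ofList_singleton, Ideal.map_span, Set.image_singleton]

lemma quotient_ofList_of_isRegularQuotient {P : ∀ (A : Type u) [CommRing A], Prop}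
    (hP : ∀ (A B : Type u) [CommRing A] [CommRing B] [Algebra A B] (f : A),
      IsRegularQuotient A B f → P A → P B)
    (hnil : P (Q ⧸ Ideal.ofList ([] : List Q))) (hl : IsWeaklyRegular Q l) :
    P (Q ⧸ Ideal.ofList l) := by
  induction l using List.reverseRecOn with
  | nil => exact hnil
  | append_singleton l g ih =>
    let : Algebra (Q ⧸ Ideal.ofList l) (Q ⧸ Ideal.ofList (l ++ [g])) :=
      (Ideal.Quotient.factor (Ideal.ofList_append l [g] ▸ le_sup_left)).toAlgebra
    exact hP _ _ _ (isRegularQuotient_ofList_append_singleton hl)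
      (ih ((isWeaklyRegular_append_iff Q l [g]).1 hl).1)

variable (Q) in
lemma hasFiniteGlobalDimension_quotient_ofList_nil [IsRegularLocalRing Q] :
    HasFiniteGlobalDimension (Q ⧸ Ideal.ofList ([] : List Q)) := by
  have e : Q ≃+* Q ⧸ Ideal.ofList ([] : List Q) :=
    (RingEquiv.quotientBot Q).symm.trans (Ideal.quotEquivOfEq Ideal.ofList_nil.symm)
  have : IsRegularLocalRing (Q ⧸ Ideal.ofList ([] : List Q)) := .of_ringEquiv e
  exact hasFiniteGlobalDimension_of_isRegularLocalRing _

theorem isCosyzygyRigid_quotient_ofList [IsRegularLocalRing Q] (hl : IsWeaklyRegular Q l) :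
    IsCosyzygyRigid (Q ⧸ Ideal.ofList l) :=
  quotient_ofList_of_isRegularQuotient (P := IsCosyzygyRigid)
    (fun _ _ _ _ _ _ h => h.isCosyzygyRigid)
    (hasFiniteGlobalDimension_quotient_ofList_nil Q).isCosyzygyRigid hl

theorem hasFiniteSelfInjectiveDimension_quotient_ofList [IsRegularLocalRing Q]
    (hl : IsWeaklyRegular Q l) : HasFiniteSelfInjectiveDimension (Q ⧸ Ideal.ofList l) :=
  quotient_ofList_of_isRegularQuotient (P := HasFiniteSelfInjectiveDimension)
    (fun _ _ _ _ _ _ h => h.hasFiniteSelfInjectiveDimension)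
    (hasFiniteGlobalDimension_quotient_ofList_nil Q).hasFiniteSelfInjectiveDimension hl

end CompleteIntersection

lemma IsRegularLocal.isRegularLocalRing {Q : Type u} [CommRing Q] [IsLocalRing Q]
    (h : IsRegularLocal Q) : IsRegularLocalRing Q := by
  obtain ⟨_, s, hs, hcard⟩ := h
  refine .of_spanFinrank_maximalIdeal_le _ ?_
  rw [← hs, ← hcard, Nat.cast_le, ← Set.ncard_coe_finset]
  exact Submodule.spanFinrank_span_le_ncard_of_finite s.finite_toSet

section HomExactness

variable {R : Type*} [CommRing R] {A B C D Y N : Type*} [AddCommGroup A] [Module R A]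
  [AddCommGroup B] [Module R B] [AddCommGroup C] [Module R C] [AddCommGroup D] [Module R D]
  [AddCommGroup Y] [Module R Y] [AddCommGroup N] [Module R N]

lemma exact_comp_iff_surjective {s : A →ₗ[R] B} {i : B →ₗ[R] C} {p : C →ₗ[R] D}
    (hi : Function.Injective i) (hip : Function.Exact i p) :
    Function.Exact (i ∘ₗ s) p ↔ Function.Surjective s := by
  refine ⟨fun hs b => ?_, fun hs => hs.comp_exact_iff_exact.2 hip⟩
  obtain ⟨a, ha⟩ := (hs (i b)).1 (hip.apply_apply_eq_zero b)
  exact ⟨a, hi ha⟩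

lemma exact_comp_iff_injective {i : A →ₗ[R] B} {p : B →ₗ[R] C} {s : C →ₗ[R] D}
    (hp : Function.Surjective p) (hip : Function.Exact i p) :
    Function.Exact i (s ∘ₗ p) ↔ Function.Injective s := by
  refine ⟨fun hs => (injective_iff_map_eq_zero s).2 fun c hc => ?_,
    fun hs => hs.comp_exact_iff_exact.2 hip⟩
  obtain ⟨b, rfl⟩ := hp c
  exact (hip b).2 ((hs b).1 hc)

lemma exact_lcomp_iff {f : A →ₗ[R] B} {g : B →ₗ[R] C} (hfg : Function.Exact f g) :
    Function.Exact (g.lcomp R Y) (f.lcomp R Y) ↔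
      Function.Surjective ((LinearMap.range g).subtype.lcomp R Y) := by
  exact exact_comp_iff_surjective (s := (LinearMap.range g).subtype.lcomp R Y)
    (i := g.rangeRestrict.lcomp R Y)
    (LinearMap.lcomp_injective_of_surjective _ g.surjective_rangeRestrict)
    (LinearMap.exact_lcomp_of_exact_of_surjective _ (exact_rangeRestrict hfg)
      g.surjective_rangeRestrict)

lemma exact_rTensor_iff_exact_lcomp {f : A →ₗ[R] B} {g : B →ₗ[R] C} (h : g ∘ₗ f = 0) :
    Function.Exact (f.rTensor N) (g.rTensor N) ↔
      Function.Exact (g.lcomp R (CharacterModule N)) (f.lcomp R (CharacterModule N)) := by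
  have hexact := LinearMap.exact_map_mkQ_range f
  have hsurj := (LinearMap.range f).mkQ_surjective
  obtain ⟨s, rfl⟩ : ∃ s, s ∘ₗ (LinearMap.range f).mkQ = g :=
    ⟨_, (LinearMap.range f).liftQ_mkQ g (LinearMap.range_le_ker_iff.2 h)⟩
  rw [LinearMap.rTensor_comp, exact_comp_iff_injective (LinearMap.rTensor_surjective N hsurj)
    (rTensor_exact N hexact hsurj), rTensor_injective_iff_lcomp_surjective]
  exact (exact_comp_iff_surjective (LinearMap.lcomp_injective_of_surjective _ hsurj)
    (LinearMap.exact_lcomp_of_exact_of_surjective _ hexact hsurj)).symm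

open TensorProduct

lemma subsingleton_tensorProduct_of_subsingleton_linearMap_characterModule
    [Subsingleton (A →ₗ[R] CharacterModule N)] : Subsingleton (A ⊗[R] N) := by
  have : Subsingleton (CharacterModule (A ⊗[R] N)) :=
    CharacterModule.homEquiv.symm.toEquiv.subsingleton
  refine subsingleton_of_forall_eq 0 fun x => CharacterModule.eq_zero_of_character_apply fun χ => ?_
  rw [Subsingleton.elim χ 0]
  rfl

lemma subsingleton_of_subsingleton_tensorProduct [IsLocalRing R] [Module.Finite R A]
    [Module.Finite R N] [Nontrivial N] [Subsingleton (A ⊗[R] N)] : Subsingleton A := by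
  let k := IsLocalRing.ResidueField R
  have hN : Nontrivial (k ⊗[R] N) := by
    rwa [← not_subsingleton_iff_nontrivial, IsLocalRing.subsingleton_tensorProduct,
      not_subsingleton_iff_nontrivial]
  have : Subsingleton ((k ⊗[R] A) ⊗[k] (k ⊗[R] N)) :=
    (AlgebraTensorModule.distribBaseChange R k A N).symm.toEquiv.subsingleton
  rw [← IsLocalRing.subsingleton_tensorProduct (R := R)]
  exact (Module.FaithfullyFlat.subsingleton_tensorProduct_iff_left k (k ⊗[R] A)).1 this

lemma subsingleton_of_subsingleton_linearMap_characterModule [IsLocalRing R] [Module.Finite R A]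
    [Module.Finite R N] [Nontrivial N] [Subsingleton (A →ₗ[R] CharacterModule N)] :
    Subsingleton A :=
  have : Subsingleton (A ⊗[R] N) :=
    subsingleton_tensorProduct_of_subsingleton_linearMap_characterModule
  subsingleton_of_subsingleton_tensorProduct (R := R) (N := N)

end HomExactness

lemma exact_of_exact_lcomp {R : Type u} [CommRing R] [IsNoetherianRing R] {A B C D : Type u}
    [AddCommGroup A] [Module R A] [AddCommGroup B] [Module R B] [Module.Finite R B]
    [AddCommGroup C] [Module R C] [AddCommGroup D] [Module R D]
    (hD : ∀ (H : Type u) [AddCommGroup H] [Module R H] [Module.Finite R H]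
      [Subsingleton (H →ₗ[R] D)], Subsingleton H)
    {f : A →ₗ[R] B} {g : B →ₗ[R] C} (hgf : g ∘ₗ f = 0)
    (hlcomp : Function.Exact (g.lcomp R D) (f.lcomp R D))
    (hext : ExtVanish R (LinearMap.range g) D 1) : Function.Exact f g := by
  let H := LinearMap.ker g ⧸ (LinearMap.range f).submoduleOf (LinearMap.ker g)
  have : Subsingleton (H →ₗ[R] D) := by
    refine subsingleton_of_forall_eq 0 fun φ => Submodule.linearMap_qext _ ?_
    have hker : IsShortExact (LinearMap.ker g).subtype g.rangeRestrict :=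
      .rangeRestrict (Submodule.injective_subtype _) (LinearMap.exact_subtype_ker_map g)
    obtain ⟨χ, hχ⟩ := hker.lcomp_surjective hext (φ ∘ₗ Submodule.mkQ _)
    obtain ⟨ψ, rfl⟩ := (hlcomp χ).1 <| LinearMap.ext fun a => by
      have ha : f a ∈ LinearMap.ker g := LinearMap.congr_fun hgf a
      have hzero : (Submodule.Quotient.mk ⟨f a, ha⟩ : H) = 0 :=
        (Submodule.Quotient.mk_eq_zero _).2 ⟨a, rfl⟩
      exact (LinearMap.congr_fun hχ ⟨f a, ha⟩).trans ((congrArg φ hzero).trans φ.map_zero)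
    rw [← hχ]
    exact LinearMap.ext fun b => (congrArg ψ b.2).trans ψ.map_zero
  have hH : Subsingleton H := hD H
  refine fun b => ⟨fun hb => ?_, fun ⟨a, ha⟩ => ha ▸ LinearMap.congr_fun hgf a⟩
  have hzero : (Submodule.Quotient.mk ⟨b, hb⟩ : H) = 0 := Subsingleton.elim _ _
  exact (Submodule.Quotient.mk_eq_zero _).1 hzero

section CochainComplex

variable {R : Type u} [CommRing R] {D : Type u} [AddCommGroup D] [Module R D] {C : ℕ → Type u}
  [∀ j, AddCommGroup (C j)] [∀ j, Module R (C j)] [∀ j, Module.Projective R (C j)]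
  {δ : ∀ j, C j →ₗ[R] C (j + 1)}

/-- Apart from degree `0`, the images `range (δ j)` form a sequence of cosyzygies. -/
lemma extVanish_range (hR : IsCosyzygyRigid R) (hδ : ∀ j, Function.Exact (δ j) (δ (j + 1)))
    (hD : ∀ j, Function.Exact ((δ (j + 1)).lcomp R D) ((δ j).lcomp R D)) (i j : ℕ) :
    ExtVanish R (LinearMap.range (δ j)) D (i + 1) := by
  have hC (i j : ℕ) : ExtVanish R (C j) D (i + 1) :=
    Abelian.Ext.subsingleton_of_projective _ _ _
  have hshort (j : ℕ) : IsShortExact (LinearMap.range (δ j)).subtype (δ (j + 1)).rangeRestrict :=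
    .subtype_range_rangeRestrict (hδ j)
  have vanish_of_le (i : ℕ) : ∀ j, i + 1 ≤ j →
      ExtVanish R (LinearMap.range (δ (j + 1))) D (i + 1) := by
    induction i with
    | zero =>
      rintro (_ | j) hj
      · lia
      · exact (hshort (j + 1)).extVanish_one_iff.2 ((exact_lcomp_iff (hδ j)).1 (hD j))
    | succ i ih =>
      rintro (_ | j) hj
      · lia
      · exact (hshort (j + 1)).extVanish_right (ih j (by lia)) (hC _ _)
  have vanish_succ (i j : ℕ) : ExtVanish R (LinearMap.range (δ (j + 1))) D (i + 1) :=
    hR 0 D (fun j => LinearMap.range (δ (j + 1))) (fun j => C (j + 2)) _ _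
      (fun j => hshort (j + 1)) (fun | i + 1, j, _ => hC i _)
      (fun | i + 1, j, _, hij => vanish_of_le i j hij) (i + 1) j i.succ_pos
  exact (hshort j).extVanish_left (hC _ _) (vanish_succ (i + 1) j)

lemma exact_of_forall_exact_lcomp [IsNoetherianRing R] [∀ j, Module.Finite R (C j)]
    (hR : IsCosyzygyRigid R)
    (hsep : ∀ (H : Type u) [AddCommGroup H] [Module R H] [Module.Finite R H]
      [Subsingleton (H →ₗ[R] D)], Subsingleton H)
    (hδδ : ∀ j, δ (j + 1) ∘ₗ δ j = 0)
    (hD : ∀ j, Function.Exact ((δ (j + 1)).lcomp R D) ((δ j).lcomp R D)) {s : ℕ}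
    (hs : ∀ j, s ≤ j → Function.Exact (δ j) (δ (j + 1))) (j : ℕ) :
    Function.Exact (δ j) (δ (j + 1)) := by
  induction s generalizing C j with
  | zero => exact hs j j.zero_le
  | succ s ih =>
    have hpos (j : ℕ) : Function.Exact (δ (j + 1)) (δ (j + 2)) :=
      ih (C := fun j => C (j + 1)) (δ := fun j => δ (j + 1)) (fun j => hδδ (j + 1))
        (fun j => hD (j + 1)) (fun j hj => hs (j + 1) (by lia)) j
    cases j with
    | zero =>
      exact exact_of_exact_lcomp hsep (hδδ 0) (hD 0)
        (extVanish_range (C := fun j => C (j + 1)) hR hpos (fun j => hD (j + 1)) 0 0)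
    | succ j => exact hpos j

end CochainComplex

section Resolution

variable {R : Type u} [CommRing R]

lemma exists_finite_free_resolution [IsNoetherianRing R] (M : Type u) [AddCommGroup M] [Module R M]
    [Module.Finite R M] :
    ∃ (n : ℕ → ℕ) (d : ∀ i, (Fin (n (i + 1)) → R) →ₗ[R] (Fin (n i) → R))
      (ε : (Fin (n 0) → R) →ₗ[R] M), Function.Surjective ε ∧ Function.Exact (d 0) ε ∧
        ∀ i, Function.Exact (d (i + 1)) (d i) := by
  have cover (a : ℕ) (K : Submodule R (Fin a → R)) :
      ∃ (b : ℕ) (d : (Fin b → R) →ₗ[R] (Fin a → R)), LinearMap.range d = K := by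
    obtain ⟨b, d, hd⟩ := Module.Finite.exists_fin' R K
    refine ⟨b, K.subtype ∘ₗ d, ?_⟩
    rw [LinearMap.range_comp_of_range_eq_top _ (LinearMap.range_eq_top.2 hd),
      Submodule.range_subtype]
  choose b d hd using cover
  obtain ⟨n₀, ε, hε⟩ := Module.Finite.exists_fin' R M
  let S (i : ℕ) : Σ a, Submodule R (Fin a → R) :=
    Nat.rec ⟨n₀, LinearMap.ker ε⟩ (fun _ s => ⟨b s.1 s.2, LinearMap.ker (d s.1 s.2)⟩) i
  exact ⟨fun i => (S i).1, fun i => d (S i).1 (S i).2, ε, hε, LinearMap.exact_iff.2 (hd _ _).symm,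
    fun i => LinearMap.exact_iff.2 (hd _ _).symm⟩

lemma exact_lcomp_of_extVanish {M Y : Type u} [AddCommGroup M] [Module R M] [AddCommGroup Y]
    [Module R Y] {G : ℕ → Type u} [∀ i, AddCommGroup (G i)] [∀ i, Module R (G i)]
    [∀ i, Module.Projective R (G i)] {d : ∀ i, G (i + 1) →ₗ[R] G i} {ε : G 0 →ₗ[R] M}
    (hε : Function.Surjective ε) (hdε : Function.Exact (d 0) ε)
    (hd : ∀ i, Function.Exact (d (i + 1)) (d i)) {i : ℕ} (h : ExtVanish R M Y (i + 1)) :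
    Function.Exact ((d i).lcomp R Y) ((d (i + 1)).lcomp R Y) := by
  have hshort := IsShortExact.subtype_range hdε hε
  induction i generalizing M G with
  | zero => exact (exact_lcomp_iff (hd 0)).2 (hshort.lcomp_surjective h)
  | succ i ih =>
    have hrange := exact_rangeRestrict (hd 0)
    have hsurj := (d 0).surjective_rangeRestrict
    exact ih (G := fun j => G (j + 1)) hsurj hrange (fun j => hd (j + 1))
      (hshort.extVanish_succ_iff.2 h) (IsShortExact.subtype_range hrange hsurj)

end Resolution

section DualTensorHom

open TensorProduct

variable {R : Type*} [CommRing R] {A B C N : Type*} [AddCommGroup A] [Module R A]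
  [AddCommGroup B] [Module R B] [AddCommGroup C] [Module R C] [AddCommGroup N] [Module R N]

lemma exact_rTensor_dualMap_iff [Module.Finite R A] [Module.Projective R A] [Module.Finite R B]
    [Module.Projective R B] [Module.Finite R C] [Module.Projective R C] {k : A →ₗ[R] B}
    {l : B →ₗ[R] C} :
    Function.Exact (l.dualMap.rTensor N) (k.dualMap.rTensor N) ↔
      Function.Exact (l.lcomp R N) (k.lcomp R N) :=
  (Function.Exact.iff_of_ladder_linearEquiv
    (e₁ := LinearEquiv.ofBijective (dualTensorHom R C N) dualTensorHom_bijective)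
    (e₂ := LinearEquiv.ofBijective (dualTensorHom R B N) dualTensorHom_bijective)
    (e₃ := LinearEquiv.ofBijective (dualTensorHom R A N) dualTensorHom_bijective)
    (dualTensorHom_comp_rTensor_dualMap l).symm (dualTensorHom_comp_rTensor_dualMap k).symm).symm

lemma dualTensorHom_bijective_of_exact [Module.Finite R A] [Module.Projective R A]
    [Module.Finite R B] [Module.Projective R B] {k : A →ₗ[R] B} {l : B →ₗ[R] C}
    (hl : Function.Surjective l) (hkl : Function.Exact k l)
    (hinj : Function.Injective (l.dualMap.rTensor N))
    (hexact : Function.Exact (l.dualMap.rTensor N) (k.dualMap.rTensor N)) :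
    Function.Bijective (dualTensorHom R C N) :=
  LinearMap.bijective_of_bijective_of_injective_of_left_exact (R := R)
    (M₁ := Module.Dual R C ⊗[R] N) (M₂ := Module.Dual R B ⊗[R] N)
    (M₃ := Module.Dual R A ⊗[R] N)
    (l.dualMap.rTensor N) (k.dualMap.rTensor N) (l.lcomp R N) (k.lcomp R N)
    (dualTensorHom R C N) (dualTensorHom R B N) (dualTensorHom R A N)
    (dualTensorHom_comp_rTensor_dualMap l).symm (dualTensorHom_comp_rTensor_dualMap k).symm hexact
    (LinearMap.exact_lcomp_of_exact_of_surjective N hkl hl) dualTensorHom_bijective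
    dualTensorHom_bijective.injective hinj (LinearMap.lcomp_injective_of_surjective l hl)

end DualTensorHom

theorem dualTensorHom_bijective_of_extVanish {R : Type u} [CommRing R] [IsLocalRing R]
    [IsNoetherianRing R] (hR : IsCosyzygyRigid R) (hR' : HasFiniteSelfInjectiveDimension R)
    {M N : Type u} [AddCommGroup M] [Module R M] [Module.Finite R M] [AddCommGroup N] [Module R N]
    [Module.Finite R N] (h : ∀ i, ExtVanish R M N (i + 1)) :
    Function.Bijective (dualTensorHom R M N) := by
  nontriviality N
  obtain ⟨n, d, ε, hε, hdε, hd⟩ := exists_finite_free_resolution (R := R) M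
  let G (j : ℕ) := Fin (n j) → R
  let δ (j : ℕ) : Module.Dual R (G j) →ₗ[R] Module.Dual R (G (j + 1)) := (d j).dualMap
  have hδδ (j : ℕ) : δ (j + 1) ∘ₗ δ j = 0 :=
    LinearMap.ext fun φ => (congrArg φ.comp (hd j).linearMap_comp_eq_zero).trans φ.comp_zero
  have hD (j : ℕ) : Function.Exact ((δ (j + 1)).lcomp R (CharacterModule N))
      ((δ j).lcomp R (CharacterModule N)) :=
    (exact_rTensor_iff_exact_lcomp (hδδ j)).1 <| exact_rTensor_dualMap_iff.2 <|
      exact_lcomp_of_extVanish (G := G) hε hdε hd (h j)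
  obtain ⟨s, hs⟩ := hR'
  have hhigh (j : ℕ) (hj : s ≤ j) : Function.Exact (δ j) (δ (j + 1)) :=
    exact_lcomp_of_extVanish (G := G) hε hdε hd
      (hs.subsingleton _ s (j + 1) (by lia) (.of R M))
  have hδ := exact_of_forall_exact_lcomp (C := fun j => Module.Dual R (G j)) hR
    (fun _ _ _ _ _ => subsingleton_of_subsingleton_linearMap_characterModule (R := R) (N := N))
    hδδ hD hhigh
  have hExt := extVanish_range (C := fun j => Module.Dual R (G j)) hR hδ hD 0
  have hεδ : Function.Exact ε.dualMap (δ 0) :=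
    LinearMap.exact_lcomp_of_exact_of_surjective R hdε hε
  have hε_short : IsShortExact ε.dualMap (δ 0).rangeRestrict :=
    .rangeRestrict (LinearMap.dualMap_injective_of_surjective hε) hεδ
  have hδ_short : IsShortExact (LinearMap.range (δ 0)).subtype (δ 1).rangeRestrict :=
    .subtype_range_rangeRestrict (hδ 0)
  refine dualTensorHom_bijective_of_exact hε hdε ?_ ?_
  · exact rTensor_injective_iff_lcomp_surjective.2 (hε_short.lcomp_surjective (hExt 0))
  · have hextend := IsShortExact.lcomp_surjective (A := LinearMap.range (δ 0)) hδ_short (hExt 1)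
    exact (exact_rTensor_iff_exact_lcomp hεδ.linearMap_comp_eq_zero).2
      ((exact_lcomp_iff hεδ).2 hextend)

theorem stmt_5 (Q : Type u) [CommRing Q] [IsLocalRing Q] (hQ : IsRegularLocal Q)
    (f : List Q) (hf : RingTheory.Sequence.IsRegular Q f)
    (M N : Type u) [AddCommGroup M] [Module (Q ⧸ Ideal.ofList f) M]
    [AddCommGroup N] [Module (Q ⧸ Ideal.ofList f) N]
    [Module.Finite (Q ⧸ Ideal.ofList f) M] [Module.Finite (Q ⧸ Ideal.ofList f) N]
    (hext : ∀ i : ℕ, 0 < i →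
      IsZero (((Ext (Q ⧸ Ideal.ofList f) (ModuleCat.{u} (Q ⧸ Ideal.ofList f)) i).obj
        (Opposite.op (ModuleCat.of (Q ⧸ Ideal.ofList f) M))).obj
        (ModuleCat.of (Q ⧸ Ideal.ofList f) N))) :
    Function.Bijective (dualTensorHom (Q ⧸ Ideal.ofList f) M N) := by
  have := hQ.isRegularLocalRing
  have hproper : Nontrivial (Q ⧸ Ideal.ofList f) := Ideal.Quotient.nontrivial_iff.2 fun h =>
    hf.top_ne_smul (by rw [h, Submodule.top_smul])
  have hlocal : IsLocalRing (Q ⧸ Ideal.ofList f) :=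
    .of_surjective' (Ideal.Quotient.mk _) Ideal.Quotient.mk_surjective
  exact dualTensorHom_bijective_of_extVanish
    (isCosyzygyRigid_quotient_ofList hf.toIsWeaklyRegular)
    (hasFiniteSelfInjectiveDimension_quotient_ofList hf.toIsWeaklyRegular)
    fun i => extVanish_of_isZero_ext i (hext (i + 1) i.succ_pos)
end
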